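/- Let C > 0, let λ be a partition of n whose number of rows and number of columns are both at most C·√n, and let π ∈ S_n. Then |χ^λ(π)| ≤ ( max[ (16·e³·C)³ , (32·e²·C)²·|π|²/n ] / √n )^{|π|}. -/

import Mathlib

open scoped BigOperators

/-- `|π|`: the minimal number of transpositions whose product is `π`; equivalently
`n` minus the number of orbits of `π`. -/
def permLength {n : ℕ} (π : Equiv.Perm (Fin n)) : ℕ :=
  π.cycleType.sum - π.cycleType.card

/-- The full cycle type of `π ∈ S_n`: the cycle type together with `1`s for fixed points. -/
def fullCycleType {n : ℕ} (π : Equiv.Perm (Fin n)) : Multiset ℕ :=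
  π.cycleType + Multiset.replicate (n - π.cycleType.sum) 1

/-- For a partition `λ` of `n` (given as an antitone `lam : Fin n → ℕ`) and a multiset
`k` of positive integers, the irreducible character value `Tr ρ^λ(k)`, defined via
Frobenius' character formula. -/
noncomputable def frobChar (n : ℕ) (lam : Fin n → ℕ) (k : Multiset ℕ) : ℤ :=
  MvPolynomial.coeff
    (Finsupp.equivFunOnFinite.symm fun i : Fin n => lam i + (n - 1 - (i : ℕ)))
    ((Multiset.map (fun m => ∑ i : Fin n, MvPolynomial.X i ^ m) k).prod *
      ∑ w : Equiv.Perm (Fin n),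
        MvPolynomial.C ((Equiv.Perm.sign w : ℤ)) *
          ∏ i : Fin n, MvPolynomial.X i ^ (n - 1 - ((w i : ℕ))))

/-- The normalized character `χ^λ(π) = Tr ρ^λ(π) / Tr ρ^λ(e)`. -/
noncomputable def normChar (n : ℕ) (lam : Fin n → ℕ) (π : Equiv.Perm (Fin n)) : ℝ :=
  (frobChar n lam (fullCycleType π) : ℝ) / (frobChar n lam (Multiset.replicate n 1) : ℝ)

/-!
Sum the Young symmetrizer of a tableau of shape `λ` over all conjugates. The resulting class
functions are pairwise orthogonal and there is one for each conjugacy class, so they form a basis of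
the class functions. Frobenius' character is orthogonal to all of them except the one of shape `λ`:
a nonzero pairing forces dominance of the shapes, in both directions once everything is twisted by
the sign. Hence it is a multiple of the latter, and the normalized character at `π` is `1 / n!`
times the signed number of ways to relabel the tableau and to write `π` as a row-preserving times a
column-preserving permutation.

Both factors can be restricted to the `K` points moved by `π`, which leaves the relabeling free on
the `n - K` others. Coloring each point by its row and column then turns the problem into counting
factorizations of a permutation of `K` points into two factors that preserve given colorings.
Merging cycles reduces this to a single long cycle. There `left * right` has only one cycle, so few
colors occur, and a factorization is determined by its color sets, by the positions of repeated
colors in the two sorted colorings, by the left factor in sorted positions, and by a starting point.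
-/

open Equiv

namespace CharBound

/-! ### Colored factorizations -/

section InvariantColorings

variable {α β ι M : Type*}

lemma comp_inv_eq_self_iff {f : α → β} {σ : Perm α} : f ∘ ⇑σ⁻¹ = f ↔ f ∘ σ = f :=
  ⟨fun h => by nth_rw 1 [← h]; funext x; simp, fun h => by nth_rw 1 [← h]; funext x; simp⟩

lemma comp_swap_eq_self [DecidableEq α] {f : α → β} {x y : α} (h : f x = f y) :
    f ∘ swap x y = f :=
  funext (apply_swap_eq_self h)

lemma comp_mul_swap_eq_self_iff [DecidableEq α] {f : α → β} {x y : α} (h : f x = f y)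
    (σ : Perm α) : f ∘ ⇑(σ * swap x y) = f ↔ f ∘ σ = f := by
  rw [Perm.coe_mul, ← Function.comp_assoc]
  nth_rw 2 [← comp_swap_eq_self h]
  exact (swap x y).surjective.injective_comp_right.eq_iff

lemma eq_of_sameCycle_of_comp_eq {g : Perm α} {f : α → β} (hf : f ∘ g = f) {x y : α}
    (h : g.SameCycle x y) : f x = f y := by
  obtain ⟨i, rfl⟩ := h
  induction i with
  | zero => rfl
  | succ m ih => rw [add_comm, zpow_one_add, Perm.mul_apply, ih]; exact (congrFun hf _).symm
  | pred m ih =>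
    rw [sub_eq_neg_add, zpow_add, zpow_neg_one, Perm.mul_apply, ih]
    exact (congrFun (comp_inv_eq_self_iff.2 hf) _).symm

lemma sum_prod_factorsThrough [Fintype α] [Fintype ι] [Fintype β] [DecidableEq α]
    [DecidableEq ι] [CommSemiring M] (φ : β → M) {s : α → ι} (hs : Function.Surjective s)
    [DecidablePred fun f : α → β => f.FactorsThrough s] :
    ∑ f : α → β with f.FactorsThrough s, ∏ x, φ (f x)
      = ∏ o, ∑ b, φ b ^ Finset.card {x | s x = o} := by
  rw [Finset.prod_univ_sum]
  refine (Finset.sum_bij (fun F _ => F ∘ s) (fun F _ => ?_) (fun F _ G _ h => ?_)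
    (fun f hf => ?_) (fun F _ => ?_)).symm
  · exact Finset.mem_filter.2 ⟨Finset.mem_univ _, fun x y h => congrArg F h⟩
  · exact hs.injective_comp_right h
  · exact ⟨f ∘ Function.surjInv hs, by simp, funext fun x =>
      (Finset.mem_filter.1 hf).2 (Function.surjInv_eq hs (s x))⟩
  · rw [← Finset.prod_fiberwise_of_maps_to (g := s) fun x _ => Finset.mem_univ (s x)]
    refine Finset.prod_congr rfl fun o _ => ?_
    rw [← Finset.prod_const]
    exact Finset.prod_congr rfl fun x hx => by rw [Function.comp_apply, (Finset.mem_filter.1 hx).2]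

variable [Fintype α] [DecidableEq α]

/-- The orbit of `x` under `g`, encoded as a nontrivial cycle factor of `g` or a fixed point. -/
def orbitLabel (g : Perm α) (x : α) : g.cycleFactorsFinset ⊕ {x // g x = x} :=
  if h : g x = x then .inr ⟨x, h⟩
  else .inl ⟨g.cycleOf x, Perm.cycleOf_mem_cycleFactorsFinset_iff.2 (Perm.mem_support.2 h)⟩

lemma orbitLabel_eq_inr_iff (g : Perm α) (x : α) (y : {x // g x = x}) :
    orbitLabel g x = .inr y ↔ x = y := by
  unfold orbitLabel
  split_ifs with h
  · simp [Subtype.ext_iff]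
  · simpa using fun hxy : x = y => h (hxy ▸ y.2)

lemma orbitLabel_eq_inl_iff (g : Perm α) (x : α) (c : g.cycleFactorsFinset) :
    orbitLabel g x = .inl c ↔ x ∈ c.1.support := by
  unfold orbitLabel
  split_ifs with h
  · simpa using fun hx => Perm.mem_support.1 (Perm.mem_cycleFactorsFinset_support_le c.2 hx) h
  · rw [Sum.inl.injEq, Subtype.ext_iff]
    refine ⟨fun hc => ?_, fun hx => (Perm.cycle_is_cycleOf hx c.2).symm⟩
    rw [← hc, Perm.mem_support_cycleOf_iff]
    exact ⟨.refl _ _, Perm.mem_support.2 h⟩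

lemma orbitLabel_surjective (g : Perm α) : Function.Surjective (orbitLabel g) := by
  rintro (⟨c, hc⟩ | y)
  · obtain ⟨x, hx⟩ := (Perm.mem_cycleFactorsFinset_iff.1 hc).1.nonempty_support
    exact ⟨x, (orbitLabel_eq_inl_iff g x ⟨c, hc⟩).2 hx⟩
  · exact ⟨y, (orbitLabel_eq_inr_iff g y y).2 rfl⟩

lemma sameCycle_of_orbitLabel_eq {g : Perm α} {x y : α} (h : orbitLabel g x = orbitLabel g y) :
    g.SameCycle x y := by
  rcases hy : orbitLabel g y with c | z
  · rw [hy] at h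
    have hx := (orbitLabel_eq_inl_iff g x c).1 h
    rw [Perm.cycle_is_cycleOf ((orbitLabel_eq_inl_iff g y c).1 hy) c.2,
      Perm.mem_support_cycleOf_iff] at hx
    exact hx.1.symm
  · rw [(orbitLabel_eq_inr_iff g x z).1 (h.trans hy), (orbitLabel_eq_inr_iff g y z).1 hy]

lemma orbitLabel_apply (g : Perm α) (x : α) : orbitLabel g (g x) = orbitLabel g x := by
  rcases hx : orbitLabel g x with c | z
  · rw [orbitLabel_eq_inl_iff] at hx ⊢
    exact (Perm.mem_cycleFactorsFinset_support c.2 x).2 hx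
  · rw [orbitLabel_eq_inr_iff] at hx ⊢
    rw [hx, z.2]

lemma comp_eq_iff_factorsThrough_orbitLabel (g : Perm α) (f : α → β) :
    f ∘ g = f ↔ f.FactorsThrough (orbitLabel g) :=
  ⟨fun hf _ _ h => eq_of_sameCycle_of_comp_eq hf (sameCycle_of_orbitLabel_eq h),
    fun hf => funext fun x => hf (orbitLabel_apply g x)⟩

variable [Fintype β] [DecidableEq β]

lemma sum_prod_comp_eq_self [CommSemiring M] (φ : β → M) (g : Perm α) :
    ∑ f : α → β with f ∘ g = f, ∏ x, φ (f x)
      = (g.partition.parts.map fun k => ∑ b, φ b ^ k).prod := by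
  classical
  simp only [comp_eq_iff_factorsThrough_orbitLabel]
  rw [sum_prod_factorsThrough φ (orbitLabel_surjective g), Fintype.prod_sum_type,
    Perm.parts_partition, Multiset.map_add, Multiset.prod_add, Perm.cycleType_def,
    Multiset.map_map]
  congr 1
  · simp only [orbitLabel_eq_inl_iff, Finset.filter_univ_mem]
    exact Finset.prod_coe_sort g.cycleFactorsFinset fun c => ∑ b, φ b ^ c.support.card
  · simp only [orbitLabel_eq_inr_iff, Finset.filter_eq', Finset.mem_univ, if_true,
      Finset.card_singleton, Finset.prod_const, Multiset.map_replicate, Multiset.prod_replicate]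
    rw [Finset.card_univ, Fintype.card_subtype, ← Finset.card_compl]
    congr 2
    ext x
    simp

lemma card_comp_eq_self (g : Perm α) :
    Finset.card {f : α → β | f ∘ g = f} = Fintype.card β ^ g.partition.parts.card := by
  simpa using sum_prod_comp_eq_self (fun _ : β => (1 : ℕ)) g

end InvariantColorings

/-- A factorization `π = left * right` together with a coloring constant on the cycles of the
left factor and one constant on the cycles of the right factor `left⁻¹ * π`. -/
@[ext]
structure ColoredFactorization {α : Type*} (π : Perm α) (ι κ : Type*) where
  left : Perm α
  rowColor : α → ι
  colColor : α → κ
  rowColor_comp : rowColor ∘ left = rowColor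
  colColor_comp : colColor ∘ ⇑(left⁻¹ * π) = colColor

section Recolor

variable {α β : Type*}

open Classical in
/-- Recolors with `b` the orbit of `y` under `τ`. -/
noncomputable def recolorOrbit (τ : Perm α) (y : α) (b : β) (f : α → β) : α → β :=
  fun z => if τ.SameCycle y z then b else f z

lemma recolorOrbit_apply_self (τ : Perm α) (y : α) (b : β) (f : α → β) :
    recolorOrbit τ y b f y = b :=
  if_pos (.refl τ y)

lemma recolorOrbit_apply_of_not_sameCycle {τ : Perm α} {y z : α} (h : ¬ τ.SameCycle y z) (b : β)
    (f : α → β) : recolorOrbit τ y b f z = f z :=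
  if_neg h

variable {τ : Perm α} {f : α → β}

lemma recolorOrbit_comp (hf : f ∘ τ = f) (y : α) (b : β) :
    recolorOrbit τ y b f ∘ τ = recolorOrbit τ y b f := by
  classical exact funext fun z => if_congr Perm.sameCycle_apply_right rfl (congrFun hf z)

lemma recolorOrbit_recolorOrbit (hf : f ∘ τ = f) (y : α) (b : β) :
    recolorOrbit τ y (f y) (recolorOrbit τ y b f) = f := by
  ext z
  by_cases hz : τ.SameCycle y z
  · simp only [recolorOrbit, if_pos hz, eq_of_sameCycle_of_comp_eq hf hz]
  · simp only [recolorOrbit, if_neg hz]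

lemma recolorOrbit_comp_mul_swap [DecidableEq α] (hf : f ∘ τ = f) (x y : α) :
    recolorOrbit τ y (f x) f ∘ ⇑(τ * swap x y) = recolorOrbit τ y (f x) f := by
  refine (comp_mul_swap_eq_self_iff ?_ τ).2 (recolorOrbit_comp hf y (f x))
  classical
  rw [recolorOrbit_apply_self, recolorOrbit, ite_eq_left_iff]
  exact fun _ => rfl

end Recolor

section MergeOrbits

variable {α β : Type*} [Finite α] [DecidableEq α] {π : Perm α} {f : α → β} {x y : α}

lemma apply_eq_apply_of_comp_mul_swap_eq (hxy : ¬ π.SameCycle y x)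
    (hf : f ∘ ⇑(π * swap x y) = f) : f x = f y := by
  have hy : f (π y) = f x := by simpa using congrFun hf x
  by_contra hne
  have hpow (j : ℕ) : f ((π ^ (j + 1)) y) = f x := by
    induction j with
    | zero => simpa using hy
    | succ j ih =>
      have hx : (π ^ (j + 1)) y ≠ x := fun h => hxy ⟨(j + 1 : ℕ), by rw [zpow_natCast]; exact h⟩
      have hy : (π ^ (j + 1)) y ≠ y := fun h => hne (by rw [← ih, h])
      rw [pow_succ', Perm.mul_apply, ← ih]
      simpa [swap_apply_of_ne_of_ne hx hy] using congrFun hf ((π ^ (j + 1)) y)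
  have h := hpow (orderOf π - 1)
  rw [Nat.sub_add_cancel (orderOf_pos π), pow_orderOf_eq_one] at h
  exact hne h.symm

lemma comp_eq_of_comp_mul_swap_eq (hxy : ¬ π.SameCycle y x)
    (hf : f ∘ ⇑(π * swap x y) = f) : f ∘ π = f :=
  (comp_mul_swap_eq_self_iff (apply_eq_apply_of_comp_mul_swap_eq hxy hf) π).1 hf

end MergeOrbits

lemma card_parts_partition_mul_swap_lt {α : Type*} [Fintype α] [DecidableEq α] {π : Perm α}
    {x y : α} (hxy : ¬ π.SameCycle y x) :
    (π * swap x y).partition.parts.card < π.partition.parts.card := by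
  rw [← Nat.add_one_le_iff, ← Nat.pow_le_pow_iff_right (one_lt_two : 1 < 2), pow_succ,
    ← Fintype.card_bool, ← card_comp_eq_self, ← card_comp_eq_self, ← Finset.card_univ,
    ← Finset.card_product]
  refine Finset.card_le_card_of_injOn (fun p => recolorOrbit π y p.2 p.1) ?_ ?_
  · intro p hp
    simp only [Finset.coe_product, Finset.coe_filter, Finset.mem_univ, true_and, Finset.coe_univ,
      Set.mem_prod, Set.mem_ofPred_eq, Set.mem_univ, and_true] at hp ⊢
    exact recolorOrbit_comp (comp_eq_of_comp_mul_swap_eq hxy hp) y p.2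
  · rintro ⟨f, b⟩ hf ⟨f', b'⟩ hf' h
    simp only [Finset.coe_product, Finset.coe_filter, Finset.mem_univ, true_and, Finset.coe_univ,
      Set.mem_prod, Set.mem_ofPred_eq, Set.mem_univ, and_true] at hf hf'
    dsimp only at h
    have hb : b = b' := by
      rw [← recolorOrbit_apply_self π y b f, h, recolorOrbit_apply_self]
    have hy : f y = f' y := by
      rw [← apply_eq_apply_of_comp_mul_swap_eq hxy hf, ← apply_eq_apply_of_comp_mul_swap_eq hxy hf',
        ← recolorOrbit_apply_of_not_sameCycle hxy b f, h, recolorOrbit_apply_of_not_sameCycle hxy]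
    rw [hb, ← recolorOrbit_recolorOrbit (comp_eq_of_comp_mul_swap_eq hxy hf) y b, h, hy,
      recolorOrbit_recolorOrbit (comp_eq_of_comp_mul_swap_eq hxy hf')]

lemma card_parts_partition_pos {α : Type*} [Fintype α] [DecidableEq α] [Nonempty α] (π : Perm α) :
    0 < π.partition.parts.card := by
  refine Multiset.card_pos.2 fun h => Fintype.card_ne_zero (α := α) ?_
  rw [← π.partition.parts_sum, h, Multiset.sum_zero]

lemma exists_permCongr_eq_finRotate {α : Type*} [Fintype α] {k : ℕ}
    (hα : Fintype.card α = k + 1) {π : Perm α} (hπ : ∀ x y, π.SameCycle x y) :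
    ∃ e : α ≃ Fin (k + 1), e.permCongr π = finRotate (k + 1) := by
  have hcycle : π.IsCycleOn (Finset.univ : Finset α) :=
    ⟨by simp, fun x _ y _ => hπ x y⟩
  obtain ⟨x⟩ : Nonempty α := Fintype.card_pos_iff.1 (by omega)
  let orbitMap (i : Fin (k + 1)) : α := (π ^ (i : ℕ)) x
  have hsurj : Function.Surjective orbitMap := fun y => by
    obtain ⟨m, hm, rfl⟩ := hcycle.exists_pow_eq (Finset.mem_univ x) (Finset.mem_univ y)
    rw [Finset.card_univ, hα] at hm
    exact ⟨⟨m, hm⟩, rfl⟩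
  let e := Equiv.ofBijective orbitMap
    ((Fintype.bijective_iff_surjective_and_card _).2 ⟨hsurj, by rw [hα, Fintype.card_fin]⟩)
  refine ⟨e.symm, Equiv.ext fun i => ?_⟩
  rw [permCongr_apply, symm_symm, symm_apply_eq]
  change π ((π ^ (i : ℕ)) x) = (π ^ (finRotate (k + 1) i : ℕ)) x
  rw [← Perm.mul_apply, ← pow_succ']
  rcases eq_or_ne i (Fin.last k) with rfl | hi
  · rw [finRotate_last, Fin.val_last, Fin.val_zero, pow_zero, Perm.one_apply, ← hα]
    exact hcycle.pow_card_apply (Finset.mem_univ x)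
  · rw [coe_finRotate_of_ne_last hi]

namespace ColoredFactorization

section Counting

variable {α β ι κ : Type*}

instance [Finite α] [Finite ι] [Finite κ] (π : Perm α) : Finite (ColoredFactorization π ι κ) :=
  Finite.of_injective (fun x => (x.left, x.rowColor, x.colColor)) fun x y h => by
    simp only [Prod.mk.injEq] at h
    exact ColoredFactorization.ext h.1 h.2.1 h.2.2

/-- Transport of a colored factorization along a relabeling of the ground set. -/
def relabel (e : α ≃ β) {π : Perm α} (x : ColoredFactorization π ι κ) :
    ColoredFactorization (e.permCongr π) ι κ where
  left := e.permCongr x.left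
  rowColor := x.rowColor ∘ e.symm
  colColor := x.colColor ∘ e.symm
  rowColor_comp := by
    ext i
    simpa using congrFun x.rowColor_comp (e.symm i)
  colColor_comp := by
    have h : (e.permCongr x.left)⁻¹ * e.permCongr π = e.permCongr (x.left⁻¹ * π) := by
      rw [← permCongrHom_coe, ← map_inv, ← map_mul]
    ext i
    rw [h]
    simpa using congrFun x.colColor_comp (e.symm i)

lemma relabel_injective (e : α ≃ β) (π : Perm α) :
    Function.Injective (relabel e : ColoredFactorization π ι κ → _) := fun x y h => by
  rw [ColoredFactorization.ext_iff] at h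
  exact ColoredFactorization.ext (e.permCongr.injective h.1)
    (e.symm.surjective.injective_comp_right h.2.1) (e.symm.surjective.injective_comp_right h.2.2)

/-- Merging of the right cycles through `u` and `v`, at the price of forgetting one color. -/
noncomputable def mergeRight [DecidableEq α] {π : Perm α} (u v : α)
    (x : ColoredFactorization π ι κ) : ColoredFactorization (π * swap u v) ι κ where
  left := x.left
  rowColor := x.rowColor
  colColor := recolorOrbit (x.left⁻¹ * π) v (x.colColor u) x.colColor
  rowColor_comp := x.rowColor_comp
  colColor_comp := by
    rw [← mul_assoc]
    exact recolorOrbit_comp_mul_swap x.colColor_comp u v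

lemma card_le_card_mul_card_mul_swap [Finite α] [DecidableEq α] [Finite ι] [Finite κ] (π : Perm α)
    (u v : α) : Nat.card (ColoredFactorization π ι κ)
      ≤ Nat.card κ * Nat.card (ColoredFactorization (π * swap u v) ι κ) := by
  rw [← Nat.card_prod]
  refine Nat.card_le_card_of_injective (fun x => (x.colColor v, x.mergeRight u v)) fun x y h => ?_
  obtain ⟨hv, hm⟩ := Prod.mk.injEq _ _ _ _ ▸ h
  obtain ⟨hl, hr, hc⟩ := ColoredFactorization.ext_iff.1 hm
  change x.left = y.left at hl
  refine ColoredFactorization.ext hl hr ?_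
  change recolorOrbit _ _ _ _ = recolorOrbit _ _ _ _ at hc
  rw [← recolorOrbit_recolorOrbit x.colColor_comp v (x.colColor u), hc, hv, hl,
    recolorOrbit_recolorOrbit y.colColor_comp]

lemma card_le_pow_mul_card_finRotate [Fintype α] [DecidableEq α] [Finite ι] [Finite κ] [Nonempty κ]
    {k : ℕ} (hα : Fintype.card α = k + 1) (π : Perm α) :
    Nat.card (ColoredFactorization π ι κ) ≤ Nat.card κ ^ (π.partition.parts.card - 1)
      * Nat.card (ColoredFactorization (finRotate (k + 1)) ι κ) := by
  induction hc : π.partition.parts.card using Nat.strong_induction_on generalizing π with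
  | _ c ih =>
    by_cases h : ∀ x y, π.SameCycle x y
    · obtain ⟨e, he⟩ := exists_permCongr_eq_finRotate hα h
      rw [← he]
      exact (Nat.card_le_card_of_injective _ (relabel_injective e π)).trans
        (Nat.le_mul_of_pos_left _ (pow_pos Nat.card_pos _))
    · push Not at h
      obtain ⟨y, x, hxy⟩ := h
      have : Nonempty α := ⟨x⟩
      have hlt := card_parts_partition_mul_swap_lt hxy
      have hpos := card_parts_partition_pos (π * swap x y)
      refine (card_le_card_mul_card_mul_swap π x y).trans ?_
      calc Nat.card κ * Nat.card (ColoredFactorization (π * swap x y) ι κ)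
          ≤ Nat.card κ * (Nat.card κ ^ ((π * swap x y).partition.parts.card - 1)
            * Nat.card (ColoredFactorization (finRotate (k + 1)) ι κ)) :=
          Nat.mul_le_mul_left _ (ih _ (hc ▸ hlt) _ rfl)
        _ ≤ Nat.card κ ^ (c - 1) * Nat.card (ColoredFactorization (finRotate (k + 1)) ι κ) := by
          rw [← mul_assoc, ← pow_succ']
          exact Nat.mul_le_mul_right _ (Nat.pow_le_pow_right Nat.card_pos (by omega))

end Counting
end ColoredFactorization

section SortedSequences

variable {ι : Type*} [LinearOrder ι] {n k : ℕ}

/-- The positions at which a sequence takes the same value twice in a row. -/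
def repeats (g : Fin (k + 1) → ι) : Finset (Fin k) := {i | g i.castSucc = g i.succ}

lemma apply_succ_le_of_range_eq {g g' : Fin (k + 1) → ι} (hg : Monotone g) (hg' : Monotone g')
    (hrange : Set.range g = Set.range g') {i : Fin k} (hi : g i.castSucc = g' i.castSucc)
    (hi' : g' i.castSucc ≠ g' i.succ) : g i.succ ≤ g' i.succ := by
  obtain ⟨j, hj⟩ : g' i.succ ∈ Set.range g := hrange ▸ Set.mem_range_self _
  rw [← hj]
  refine hg (Fin.castSucc_lt_iff_succ_le.1 (lt_of_not_ge fun hji => hi' ?_))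
  exact le_antisymm (hg' (Fin.castSucc_lt_succ).le) (hj ▸ hi ▸ hg hji)

lemma apply_zero_le_of_range_eq {g g' : Fin (k + 1) → ι} (hg : Monotone g)
    (hrange : Set.range g = Set.range g') : g 0 ≤ g' 0 := by
  obtain ⟨j, hj⟩ : g' 0 ∈ Set.range g := hrange ▸ Set.mem_range_self _
  exact hj ▸ hg (Fin.zero_le j)

lemma eq_of_range_eq_of_repeats_eq {g g' : Fin (k + 1) → ι} (hg : Monotone g) (hg' : Monotone g')
    (hrange : Set.range g = Set.range g') (hrep : repeats g = repeats g') : g = g' := by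
  have hrep (i : Fin k) : g i.castSucc = g i.succ ↔ g' i.castSucc = g' i.succ := by
    simpa [repeats] using Finset.ext_iff.1 hrep i
  funext i
  induction i using Fin.induction with
  | zero =>
    exact le_antisymm (apply_zero_le_of_range_eq hg hrange)
      (apply_zero_le_of_range_eq hg' hrange.symm)
  | succ i ih =>
    by_cases h : g i.castSucc = g i.succ
    · rw [← h, ← (hrep i).1 h, ih]
    · exact le_antisymm (apply_succ_le_of_range_eq hg hg' hrange ih (mt (hrep i).2 h))
        (apply_succ_le_of_range_eq hg' hg hrange.symm ih.symm h)

lemma comp_sort_eq_of_range_eq {f f' : Fin (k + 1) → ι} (hrange : Set.range f = Set.range f')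
    (hrep : repeats (f ∘ Tuple.sort f) = repeats (f' ∘ Tuple.sort f')) :
    f ∘ Tuple.sort f = f' ∘ Tuple.sort f' :=
  eq_of_range_eq_of_repeats_eq (Tuple.monotone_sort f) (Tuple.monotone_sort f')
    (by rwa [EquivLike.range_comp, EquivLike.range_comp]) hrep

lemma sort_inv_lt_sort_inv_iff (f : Fin n → ι) (i j : Fin n) :
    (Tuple.sort f)⁻¹ i < (Tuple.sort f)⁻¹ j ↔ f i < f j ∨ f i = f j ∧ i < j :=
  (Tuple.graphEquiv₂ f).symm.lt_iff_lt.trans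
    (Prod.Lex.toLex_lt_toLex (x := (f i, i)) (y := (f j, j)))

lemma val_sort_inv (f : Fin n → ι) (t : Fin n) :
    ((Tuple.sort f)⁻¹ t : ℕ) = Finset.card {x | (f ∘ Tuple.sort f) x < f t}
      + Finset.card {i | f i = f t ∧ i < t} := by
  have hsmaller : Finset.card {x | (f ∘ Tuple.sort f) x < f t} = Finset.card {i | f i < f t} :=
    Finset.card_equiv (Tuple.sort f) (by simp)
  have hrank : Finset.card {i | (Tuple.sort f)⁻¹ i < (Tuple.sort f)⁻¹ t} = (Tuple.sort f)⁻¹ t :=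
    (Finset.card_equiv (t := Finset.Iio ((Tuple.sort f)⁻¹ t)) (Tuple.sort f)⁻¹ (by simp)).trans
      (Fin.card_Iio _)
  rw [hsmaller, ← hrank, ← Finset.card_union_of_disjoint, ← Finset.filter_or]
  · simp only [sort_inv_lt_sort_inv_iff]
  · exact Finset.disjoint_filter.2 fun i _ hlt heq => hlt.ne heq.1

lemma sort_inv_eq_of_eqOn_Iic {f f' : Fin n → ι} (hsort : f ∘ Tuple.sort f = f' ∘ Tuple.sort f')
    {t : Fin n} (ht : Set.EqOn f f' (Set.Iic t)) : (Tuple.sort f)⁻¹ t = (Tuple.sort f')⁻¹ t := by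
  ext
  rw [val_sort_inv, val_sort_inv, hsort, ht Set.self_mem_Iic]
  congr 3 with i
  exact and_congr_left fun hi => by rw [ht hi.le]

end SortedSequences

namespace ColoredFactorization

section Encoding

variable {n k : ℕ} {ι κ : Type*} [LinearOrder ι] [LinearOrder κ]

/-- The left factor, read in the positions obtained by sorting the two colorings. -/
def sortedLeft {π : Perm (Fin n)} (x : ColoredFactorization π ι κ) : Perm (Fin n) :=
  (Tuple.sort x.colColor)⁻¹ * π⁻¹ * x.left * Tuple.sort x.rowColor

lemma colColor_eq_sortedLeft {π : Perm (Fin n)} (x : ColoredFactorization π ι κ) (t : Fin n) :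
    x.colColor t = (x.colColor ∘ Tuple.sort x.colColor)
      (x.sortedLeft ((Tuple.sort x.rowColor)⁻¹ t)) := by
  simpa [sortedLeft] using congrFun x.colColor_comp (π⁻¹ (x.left t))

lemma rowColor_eq_sortedLeft {π : Perm (Fin n)} (x : ColoredFactorization π ι κ) (t : Fin n) :
    x.rowColor (π t) = (x.rowColor ∘ Tuple.sort x.rowColor)
      (x.sortedLeft⁻¹ ((Tuple.sort x.colColor)⁻¹ t)) := by
  simpa [sortedLeft, mul_inv_rev] using congrFun x.rowColor_comp (x.left⁻¹ (π t))

/-- The row color of `t` determines its column color through the left factor, and that one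
determines the row color of `t + 1`. The sorted position of `t` depends only on the colors at
`0, …, t`. -/
lemma eqOn_Iic_of_sortedLeft_eq {x y : ColoredFactorization (finRotate (k + 1)) ι κ}
    (hrow : x.rowColor ∘ Tuple.sort x.rowColor = y.rowColor ∘ Tuple.sort y.rowColor)
    (hcol : x.colColor ∘ Tuple.sort x.colColor = y.colColor ∘ Tuple.sort y.colColor)
    (hleft : x.sortedLeft = y.sortedLeft)
    (hstart : (Tuple.sort x.rowColor)⁻¹ 0 = (Tuple.sort y.rowColor)⁻¹ 0) (t : Fin (k + 1)) :
    Set.EqOn x.rowColor y.rowColor (Set.Iic t) ∧ Set.EqOn x.colColor y.colColor (Set.Iic t) := by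
  have hcolStep {t} (h : Set.EqOn x.rowColor y.rowColor (Set.Iic t)) :
      x.colColor t = y.colColor t := by
    rw [colColor_eq_sortedLeft, colColor_eq_sortedLeft, hcol, hleft, sort_inv_eq_of_eqOn_Iic hrow h]
  induction t using Fin.induction with
  | zero =>
    have hrow0 : x.rowColor 0 = y.rowColor 0 := by
      have h := congrFun hrow ((Tuple.sort x.rowColor)⁻¹ 0)
      nth_rw 2 [hstart] at h
      simpa using h
    have hIic : Set.Iic (0 : Fin (k + 1)) = {0} := Set.Iic_bot
    simp only [hIic, Set.eqOn_singleton] at hcolStep ⊢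
    exact ⟨hrow0, hcolStep (hIic ▸ Set.eqOn_singleton.2 hrow0)⟩
  | succ i ih =>
    have hsplit {s} (hs : s ∈ Set.Iic i.succ) : s ∈ Set.Iic i.castSucc ∨ s = i.succ :=
      hs.lt_or_eq.imp_left Fin.le_castSucc_iff.2
    have hrow' : Set.EqOn x.rowColor y.rowColor (Set.Iic i.succ) := fun s hs => by
      rcases hsplit hs with h | rfl
      · exact ih.1 h
      · have hi : finRotate (k + 1) i.castSucc = i.succ := by
          rw [finRotate_apply, Fin.coeSucc_eq_succ]
        rw [← hi, rowColor_eq_sortedLeft, rowColor_eq_sortedLeft, hrow, hleft,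
          sort_inv_eq_of_eqOn_Iic hcol ih.2]
    refine ⟨hrow', fun s hs => ?_⟩
    rcases hsplit hs with h | rfl
    exacts [ih.2 h, hcolStep hrow']

lemma eq_of_sortedLeft_eq {x y : ColoredFactorization (finRotate (k + 1)) ι κ}
    (hrow : x.rowColor ∘ Tuple.sort x.rowColor = y.rowColor ∘ Tuple.sort y.rowColor)
    (hcol : x.colColor ∘ Tuple.sort x.colColor = y.colColor ∘ Tuple.sort y.colColor)
    (hleft : x.sortedLeft = y.sortedLeft)
    (hstart : (Tuple.sort x.rowColor)⁻¹ 0 = (Tuple.sort y.rowColor)⁻¹ 0) : x = y := by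
  have hEq := eqOn_Iic_of_sortedLeft_eq hrow hcol hleft hstart
  have hr : x.rowColor = y.rowColor := funext fun t => (hEq t).1 Set.self_mem_Iic
  have hc : x.colColor = y.colColor := funext fun t => (hEq t).2 Set.self_mem_Iic
  refine ColoredFactorization.ext ?_ hr hc
  simpa [sortedLeft, hr, hc] using hleft

end Encoding
end ColoredFactorization

section ImageCard

open Finset

variable {α β γ : Type*}

/-- The space of rational functions on `α` that factor through `f`. -/
def factoringThrough (f : α → β) : Submodule ℚ (α → ℚ) :=
  (LinearMap.funLeft ℚ ℚ (Set.rangeFactorization f)).range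

lemma factorsThrough_of_mem_factoringThrough {f : α → β} {u : α → ℚ}
    (hu : u ∈ factoringThrough f) : u.FactorsThrough f := by
  obtain ⟨v, rfl⟩ := hu
  exact fun x y hxy => congrArg v (Subtype.ext hxy)

variable [Fintype α]

lemma finrank_factoringThrough [DecidableEq β] (f : α → β) :
    Module.finrank ℚ (factoringThrough f) = #(univ.image f) := by
  rw [factoringThrough, LinearMap.finrank_range_of_inj
    (LinearMap.funLeft_injective_of_surjective _ _ _ Set.rangeFactorization_surjective),
    Module.finrank_fintype_fun_eq_card, ← Set.toFinset_range, Set.toFinset_card]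

lemma card_image_add_card_image_le [DecidableEq β] [DecidableEq γ] (f : α → β) (g : α → γ)
    (h : ∀ u : α → ℚ, u.FactorsThrough f → u.FactorsThrough g → ∃ c, ∀ x, u x = c) :
    #(univ.image f) + #(univ.image g) ≤ Fintype.card α + 1 := by
  have hsup := Submodule.finrank_le (factoringThrough f ⊔ factoringThrough g)
  have hinf : Module.finrank ℚ ↥(factoringThrough f ⊓ factoringThrough g) ≤ 1 := by
    have hle : factoringThrough f ⊓ factoringThrough g ≤ Submodule.span ℚ {1} := fun u hu => by
      obtain ⟨c, hc⟩ := h u (factorsThrough_of_mem_factoringThrough hu.1)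
        (factorsThrough_of_mem_factoringThrough hu.2)
      exact Submodule.mem_span_singleton.2 ⟨c, funext fun x => by simp [hc]⟩
    refine (Submodule.finrank_mono hle).trans ((finrank_span_le_card _).trans ?_)
    rw [Set.toFinset_singleton, card_singleton]
  rw [← finrank_factoringThrough, ← finrank_factoringThrough,
    ← Submodule.finrank_sup_add_finrank_inf_eq, ← Module.finrank_fintype_fun_eq_card ℚ]
  exact Nat.add_le_add hsup hinf

end ImageCard

section ColorSets

open Finset

lemma factorial_add_add_le (p q m : ℕ) :
    (p + q + m).factorial
      ≤ 4 ^ (p + q + m) * (p.factorial * q.factorial * m.factorial) := by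
  have h₁ := Nat.add_choose_mul_factorial_mul_factorial (p + q) m
  have h₂ := Nat.add_choose_mul_factorial_mul_factorial p q
  have hpow : 2 ^ (p + q) ≤ 2 ^ (p + q + m) := Nat.pow_le_pow_right two_pos (Nat.le_add_right _ _)
  calc (p + q + m).factorial
      = ((p + q + m).choose m * (p + q).choose q)
          * (p.factorial * q.factorial * m.factorial) := by rw [← h₁, ← h₂]; ring
    _ ≤ (2 ^ (p + q + m) * 2 ^ (p + q + m)) * (p.factorial * q.factorial * m.factorial) := by
        gcongr
        · exact Nat.choose_le_two_pow _ _
        · exact (Nat.choose_le_two_pow _ _).trans hpow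
    _ = 4 ^ (p + q + m) * (p.factorial * q.factorial * m.factorial) := by
        rw [← mul_pow]; norm_num

lemma choose_mul_choose_mul_factorial_le (R L p q m : ℕ) :
    R.choose p * L.choose q * (p + q + m).factorial
      ≤ 4 ^ (p + q + m) * (R ^ p * L ^ q * m ^ m) := by
  have hR := Nat.descFactorial_le_pow R p
  have hL := Nat.descFactorial_le_pow L q
  rw [Nat.descFactorial_eq_factorial_mul_choose] at hR hL
  calc R.choose p * L.choose q * (p + q + m).factorial
      ≤ R.choose p * L.choose q
          * (4 ^ (p + q + m) * (p.factorial * q.factorial * m.factorial)) := by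
        gcongr; exact factorial_add_add_le p q m
    _ = 4 ^ (p + q + m) * ((p.factorial * R.choose p) * (q.factorial * L.choose q)
          * m.factorial) := by ring
    _ ≤ 4 ^ (p + q + m) * (R ^ p * L ^ q * m ^ m) := by
        gcongr; exact Nat.factorial_le_pow m

lemma choose_mul_choose_mul_factorial_le_mul_pow {R L p q k : ℕ} {N Y : ℝ} (hR : R ≤ N)
    (hL : L ≤ N) (hY : 1 ≤ Y) (hk : k + 1 ≤ N * Y) (hp : 0 < p) (hpq : p + q ≤ k + 2) :
    ((R.choose p * L.choose q : ℕ) : ℝ) * (k + 2).factorial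
      ≤ (4 * N) ^ (k + 2) * Y ^ (k + 1) := by
  obtain ⟨m, hm⟩ := Nat.exists_eq_add_of_le hpq
  have hN : 0 ≤ N := (Nat.cast_nonneg _).trans hR
  have hmk : m ≤ k + 1 := by omega
  have hmNY : (m : ℝ) ≤ N * Y := (by exact_mod_cast hmk : (m : ℝ) ≤ k + 1).trans hk
  calc ((R.choose p * L.choose q : ℕ) : ℝ) * (k + 2).factorial
      ≤ 4 ^ (k + 2) * (R ^ p * L ^ q * m ^ m) := by
        rw [hm]; exact_mod_cast choose_mul_choose_mul_factorial_le R L p q m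
    _ ≤ 4 ^ (k + 2) * (N ^ p * N ^ q * (N * Y) ^ m) := by gcongr
    _ = (4 * N) ^ (k + 2) * Y ^ m := by rw [mul_pow 4, hm]; ring
    _ ≤ (4 * N) ^ (k + 2) * Y ^ (k + 1) := by gcongr

variable (ι κ : Type*)

/-- The possible pairs of color sets of a colored factorization of a cycle of length `k + 1`. -/
abbrev ColorSets (k : ℕ) : Type _ :=
  {s : Finset ι × Finset κ // s.1.Nonempty ∧ s.2.Nonempty ∧ #s.1 + #s.2 ≤ k + 2}

variable [Fintype ι] [Fintype κ] {ι κ}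

lemma card_colorSets_mul_factorial_le {k : ℕ} {N Y : ℝ} (hι : Fintype.card ι ≤ N)
    (hκ : Fintype.card κ ≤ N) (hY : 1 ≤ Y) (hk : k + 1 ≤ N * Y) :
    (Nat.card (ColorSets ι κ k) : ℝ) * (k + 2).factorial
      ≤ (k + 1) ^ 2 * ((4 * N) ^ (k + 2) * Y ^ (k + 1)) := by
  classical
  set S : Finset (Finset ι × Finset κ) :=
    {s | s.1.Nonempty ∧ s.2.Nonempty ∧ #s.1 + #s.2 ≤ k + 2} with hS
  let sizes (s : Finset ι × Finset κ) : ℕ × ℕ := (#s.1, #s.2)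
  have hN : 0 ≤ N := (Nat.cast_nonneg _).trans hι
  have hmem {s} (hs : s ∈ S) : 0 < #s.1 ∧ 0 < #s.2 ∧ #s.1 + #s.2 ≤ k + 2 := by
    simpa only [hS, mem_filter_univ, card_pos] using hs
  have hsizes : #(S.image sizes) ≤ (k + 1) ^ 2 := by
    calc #(S.image sizes) ≤ #(Icc 1 (k + 1) ×ˢ Icc 1 (k + 1)) :=
          card_le_card (image_subset_iff.2 fun s hs => by
            have := hmem hs
            rw [mem_product, mem_Icc, mem_Icc]
            dsimp only [sizes]
            omega)
      _ = (k + 1) ^ 2 := by rw [card_product, Nat.card_Icc, Nat.add_sub_cancel, sq]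
  have hfibre : ∀ b ∈ S.image sizes, (#{a ∈ S | sizes a = b} : ℝ) * (k + 2).factorial
      ≤ (4 * N) ^ (k + 2) * Y ^ (k + 1) := by
    refine forall_mem_image.2 fun s hs => ?_
    obtain ⟨hp, _, hpq⟩ := hmem hs
    refine le_trans ?_ (choose_mul_choose_mul_factorial_le_mul_pow hι hκ hY hk hp hpq)
    gcongr
    rw [← card_univ, ← card_univ, ← card_powersetCard, ← card_powersetCard, ← card_product]
    refine card_le_card fun a ha => ?_
    simpa [sizes] using (mem_filter.1 ha).2
  rw [Nat.card_eq_fintype_card, Fintype.card_subtype, ← hS,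
    card_eq_sum_card_image sizes, Nat.cast_sum, sum_mul]
  refine (sum_le_card_nsmul _ _ _ hfibre).trans ?_
  rw [nsmul_eq_mul]
  gcongr
  exact_mod_cast hsizes

end ColorSets

lemma apply_eq_apply_of_comp_finRotate_eq {k : ℕ} {β : Type*} {f : Fin (k + 1) → β}
    (hf : f ∘ finRotate (k + 1) = f) (i : Fin (k + 1)) : f i = f 0 := by
  induction i using Fin.induction with
  | zero => rfl
  | succ i ih =>
    rw [← ih, ← Fin.coeSucc_eq_succ, ← finRotate_apply]
    exact congrFun hf i.castSucc

lemma sixteen_mul_sq_le (k : ℕ) : 16 * (k + 1 : ℝ) ^ 2 ≤ 42 * (21 / 8) ^ k := by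
  induction k with
  | zero => norm_num
  | succ k ih =>
    rcases Nat.eq_zero_or_pos k with rfl | hk
    · norm_num
    · have hk : (1 : ℝ) ≤ k := by exact_mod_cast hk
      push_cast
      rw [pow_succ (21 / 8 : ℝ)]
      nlinarith

namespace ColoredFactorization

open Finset

section Cycle

variable {k : ℕ} {ι κ : Type*}

lemma card_image_rowColor_add_card_image_colColor_le [DecidableEq ι] [DecidableEq κ]
    (x : ColoredFactorization (finRotate (k + 1)) ι κ) :
    #(univ.image x.rowColor) + #(univ.image x.colColor) ≤ k + 2 := by
  have h := card_image_add_card_image_le x.rowColor x.colColor fun u hr hc =>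
    ⟨u 0, apply_eq_apply_of_comp_finRotate_eq <| funext fun t => by
      have ht := hr (congrFun x.rowColor_comp ((x.left⁻¹ * finRotate (k + 1)) t))
      rw [← Perm.mul_apply, mul_inv_cancel_left] at ht
      exact ht.trans (hc (congrFun x.colColor_comp t))⟩
  rwa [Fintype.card_fin] at h

/-- The color sets of a colored factorization of a cycle. -/
def colorSets [DecidableEq ι] [DecidableEq κ]
    (x : ColoredFactorization (finRotate (k + 1)) ι κ) : ColorSets ι κ k :=
  ⟨(univ.image x.rowColor, univ.image x.colColor), univ_nonempty.image _, univ_nonempty.image _,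
    x.card_image_rowColor_add_card_image_colColor_le⟩

lemma card_finRotate_le [Finite ι] [Finite κ] [LinearOrder ι] [LinearOrder κ] :
    Nat.card (ColoredFactorization (finRotate (k + 1)) ι κ)
      ≤ Nat.card (ColorSets ι κ k) * (2 ^ k * 2 ^ k * ((k + 1).factorial * (k + 1))) := by
  let code (x : ColoredFactorization (finRotate (k + 1)) ι κ) :
      ColorSets ι κ k × (Finset (Fin k) × Finset (Fin k)) × Perm (Fin (k + 1)) × Fin (k + 1) :=
    (x.colorSets, (repeats (x.rowColor ∘ Tuple.sort x.rowColor),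
      repeats (x.colColor ∘ Tuple.sort x.colColor)), x.sortedLeft, (Tuple.sort x.rowColor)⁻¹ 0)
  have hcode : Function.Injective code := fun x y h => by
    simp only [code, Prod.mk.injEq] at h
    obtain ⟨hsets, ⟨hrow, hcol⟩, hleft, hstart⟩ := h
    have hrange : Set.range x.rowColor = Set.range y.rowColor := by
      simpa [colorSets] using congrArg (fun s => (s.1.1 : Set ι)) hsets
    have hrange' : Set.range x.colColor = Set.range y.colColor := by
      simpa [colorSets] using congrArg (fun s => (s.1.2 : Set κ)) hsets
    exact eq_of_sortedLeft_eq (comp_sort_eq_of_range_eq hrange hrow)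
      (comp_sort_eq_of_range_eq hrange' hcol) hleft hstart
  refine (Nat.card_le_card_of_injective code hcode).trans_eq ?_
  rw [Nat.card_prod, Nat.card_prod, Nat.card_prod, Nat.card_prod, Nat.card_perm,
    Nat.card_eq_fintype_card (α := Finset (Fin k)), Fintype.card_finset, Nat.card_fin,
    Fintype.card_fin]

lemma card_finRotate_le_pow [Fintype ι] [Fintype κ] [LinearOrder ι] [LinearOrder κ] {N : ℝ}
    (hN : 0 < N) (hι : Fintype.card ι ≤ N) (hκ : Fintype.card κ ≤ N) :
    (Nat.card (ColoredFactorization (finRotate (k + 1)) ι κ) : ℝ)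
      ≤ N ^ (k + 2) * (42 * max 1 ((k + 1 : ℝ) / N)) ^ (k + 1) := by
  set Y : ℝ := max 1 ((k + 1 : ℝ) / N)
  have hY : k + 1 ≤ N * Y := (div_le_iff₀' hN).1 (le_max_right _ _)
  have hfact : (k + 1).factorial * (k + 1) ≤ (k + 2).factorial := by
    rw [Nat.factorial_succ (k + 1), mul_comm]
    gcongr
    omega
  calc (Nat.card (ColoredFactorization (finRotate (k + 1)) ι κ) : ℝ)
      ≤ Nat.card (ColorSets ι κ k) * (2 ^ k * 2 ^ k * (k + 2).factorial) := by
        exact_mod_cast (card_finRotate_le (k := k) (ι := ι) (κ := κ)).trans (by gcongr)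
    _ = 4 ^ k * (Nat.card (ColorSets ι κ k) * (k + 2).factorial) := by
        rw [← mul_pow]; norm_num; ring
    _ ≤ 4 ^ k * ((k + 1) ^ 2 * ((4 * N) ^ (k + 2) * Y ^ (k + 1))) := by
        have := card_colorSets_mul_factorial_le hι hκ (le_max_left _ _) hY
        gcongr 4 ^ k * ?_
    _ = 16 ^ k * (16 * (k + 1) ^ 2) * (N ^ (k + 2) * Y ^ (k + 1)) := by
        rw [mul_pow, show (16 : ℝ) = 4 * 4 by norm_num, mul_pow]; ring
    _ ≤ 16 ^ k * (42 * (21 / 8) ^ k) * (N ^ (k + 2) * Y ^ (k + 1)) := by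
        have := sixteen_mul_sq_le k
        gcongr
    _ = N ^ (k + 2) * (42 * Y) ^ (k + 1) := by
        rw [mul_left_comm (16 ^ k : ℝ), ← mul_pow, mul_pow 42, pow_succ 42]; norm_num; ring

end Cycle

lemma card_le_pow_mul {α ι κ : Type*} [Fintype α] [Nonempty α] [DecidableEq α] [Fintype ι]
    [Fintype κ] [Nonempty κ] [LinearOrder ι] [LinearOrder κ] (π : Perm α) {N : ℝ}
    (hι : Fintype.card ι ≤ N) (hκ : Fintype.card κ ≤ N) :
    (Nat.card (ColoredFactorization π ι κ) : ℝ)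
      ≤ N ^ (Fintype.card α + π.partition.parts.card)
        * (42 * max 1 ((Fintype.card α : ℝ) / N)) ^ Fintype.card α := by
  have hN : 0 < N := (Nat.cast_pos.2 Fintype.card_pos).trans_le hκ
  obtain ⟨k, hk⟩ := Nat.exists_eq_add_one_of_ne_zero (Fintype.card_ne_zero (α := α))
  obtain ⟨c, hc⟩ := Nat.exists_eq_add_one_of_ne_zero (card_parts_partition_pos π).ne'
  have hcycle := card_finRotate_le_pow (k := k) hN hι hκ
  calc (Nat.card (ColoredFactorization π ι κ) : ℝ)
      ≤ Nat.card κ ^ c * Nat.card (ColoredFactorization (finRotate (k + 1)) ι κ) := by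
        have h := card_le_pow_mul_card_finRotate (ι := ι) (κ := κ) hk π
        rw [hc, Nat.add_sub_cancel] at h
        exact_mod_cast h
    _ ≤ N ^ c * (N ^ (k + 2) * (42 * max 1 ((k + 1 : ℝ) / N)) ^ (k + 1)) := by
        rw [Nat.card_eq_fintype_card (α := κ)]
        gcongr
    _ = _ := by
        rw [← Nat.cast_succ, Nat.succ_eq_add_one, ← hk, hc,
          show k + 2 = Fintype.card α + 1 by omega]
        ring

end ColoredFactorization

/-! ### Frobenius' coefficients and the sign character -/

lemma fullCycleType_eq_parts_partition {n : ℕ} (π : Perm (Fin n)) :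
    fullCycleType π = π.partition.parts := by
  rw [Perm.parts_partition, ← Perm.sum_cycleType, Fintype.card_fin, fullCycleType]

lemma intCast_sign_mul_self {α : Type*} [Fintype α] [DecidableEq α] (σ : Perm α) :
    (Perm.sign σ : ℤ) * Perm.sign σ = 1 := by
  rw [← Units.val_mul, Int.units_mul_self, Units.val_one]

section Alternant

open MvPolynomial

variable {n : ℕ}

/-- The content of a word `f`: how often each letter occurs. -/
def content {α ι : Type*} [Fintype α] [DecidableEq ι] (f : α → ι) (i : ι) : ℕ :=
  Finset.card {x | f x = i}

lemma content_comp_perm {α ι : Type*} [Fintype α] [DecidableEq ι] (f : α → ι) (g : Perm α) :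
    content (f ∘ g) = content f :=
  funext fun i => Finset.card_equiv g (by simp)

lemma prod_X_pow_eq_monomial_equivFunOnFinite {σ R : Type*} [Fintype σ] [CommSemiring R]
    (d : σ → ℕ) : ∏ i, (X i : MvPolynomial σ R) ^ d i
      = monomial (Finsupp.equivFunOnFinite.symm d) 1 := by
  rw [monomial_eq, Finsupp.prod_fintype _ _ fun i => pow_zero _, C_1, one_mul]
  rfl

lemma prod_X_apply_eq_monomial_content {α σ R : Type*} [Fintype α] [Finite σ] [DecidableEq σ]
    [CommSemiring R] (f : α → σ) : ∏ x, (X (f x) : MvPolynomial σ R)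
      = monomial (Finsupp.equivFunOnFinite.symm (content f)) 1 := by
  have := Fintype.ofFinite σ
  rw [← prod_X_pow_eq_monomial_equivFunOnFinite, ← Finset.prod_fiberwise _ f]
  refine Finset.prod_congr rfl fun i _ => Finset.prod_eq_pow_card fun x hx => ?_
  rw [(Finset.mem_filter.1 hx).2]

/-- The coefficient of `x ^ l` in the product of the power sums indexed by `k` and the alternant
`∑ w, sign w * x ^ (w δ)`. -/
noncomputable def alternantCoeff (l : Fin n → ℕ) (k : Multiset ℕ) : ℤ :=
  coeff (Finsupp.equivFunOnFinite.symm l)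
    ((Multiset.map (fun m => ∑ i : Fin n, X i ^ m) k).prod *
      ∑ w : Perm (Fin n), C (Perm.sign w : ℤ) * ∏ i : Fin n, X i ^ (n - 1 - (w i : ℕ)))

/-- The beta numbers `lam + δ`. -/
def betaNumber (lam : Fin n → ℕ) (i : Fin n) : ℕ := lam i + (n - 1 - i)

lemma frobChar_eq_alternantCoeff (lam : Fin n → ℕ) (k : Multiset ℕ) :
    frobChar n lam k = alternantCoeff (betaNumber lam) k := rfl

lemma alternantCoeff_parts_partition (l : Fin n → ℕ) (g : Perm (Fin n)) :
    alternantCoeff l g.partition.parts = ∑ f : Fin n → Fin n with f ∘ g = f, ∑ w : Perm (Fin n),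
      if (fun i => content f i + (n - 1 - w i)) = l then (Perm.sign w : ℤ) else 0 := by
  rw [alternantCoeff, ← sum_prod_comp_eq_self, Finset.sum_mul_sum, coeff_sum]
  refine Finset.sum_congr rfl fun f _ => ?_
  rw [coeff_sum]
  refine Finset.sum_congr rfl fun w _ => ?_
  rw [prod_X_apply_eq_monomial_content,
    prod_X_pow_eq_monomial_equivFunOnFinite fun i => n - 1 - (w i : ℕ), mul_left_comm,
    monomial_mul, coeff_C_mul, coeff_monomial, mul_one, mul_ite, mul_one, mul_zero]
  refine if_congr ?_ rfl rfl
  rw [Equiv.eq_symm_apply]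
  rfl

lemma alternantCoeff_zero (l : Fin n → ℕ) : alternantCoeff l 0
    = ∑ w : Perm (Fin n), if (fun i => n - 1 - (w i : ℕ)) = l then (Perm.sign w : ℤ) else 0 := by
  rw [alternantCoeff, Multiset.map_zero, Multiset.prod_zero, one_mul, coeff_sum]
  refine Finset.sum_congr rfl fun w _ => ?_
  rw [prod_X_pow_eq_monomial_equivFunOnFinite fun i => n - 1 - (w i : ℕ), coeff_C_mul,
    coeff_monomial, mul_ite, mul_one, mul_zero]
  exact if_congr (Equiv.apply_eq_iff_eq _) rfl rfl

lemma alternantCoeff_cons (l : Fin n → ℕ) (k : ℕ) (ks : Multiset ℕ) : alternantCoeff l (k ::ₘ ks)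
    = ∑ i, if k ≤ l i then alternantCoeff (Function.update l i (l i - k)) ks else 0 := by
  rw [alternantCoeff, Multiset.map_cons, Multiset.prod_cons, mul_assoc, Finset.sum_mul, coeff_sum]
  refine Finset.sum_congr rfl fun i _ => ?_
  rw [X_pow_eq_monomial, coeff_monomial_mul', one_mul, alternantCoeff]
  refine if_congr (by simp [Finsupp.single_le_iff]) ?_ rfl
  congr 1
  ext j
  rcases eq_or_ne j i with rfl | hj
  · simp
  · simp [hj]

lemma alternantCoeff_comp_perm (l : Fin n → ℕ) (σ : Perm (Fin n)) (ks : Multiset ℕ) :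
    alternantCoeff (l ∘ σ) ks = Perm.sign σ * alternantCoeff l ks := by
  induction ks using Multiset.induction generalizing l with
  | empty =>
    rw [alternantCoeff_zero, alternantCoeff_zero, Finset.mul_sum]
    refine (Fintype.sum_equiv (Equiv.mulRight σ) _ _ fun w => ?_).symm
    rw [Equiv.coe_mulRight, mul_ite, mul_zero, Perm.sign_mul, mul_comm (Perm.sign w),
      Units.val_mul]
    refine if_congr ?_ rfl rfl
    exact σ.surjective.injective_comp_right.eq_iff.symm
  | cons k ks ih =>
    rw [alternantCoeff_cons, alternantCoeff_cons, Finset.mul_sum]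
    refine Fintype.sum_equiv σ _ _ fun i => ?_
    rw [mul_ite, mul_zero, ← ih, Function.update_comp_equiv, Equiv.symm_apply_apply]
    rfl

lemma alternantCoeff_eq_zero_of_apply_eq {l : Fin n → ℕ} {i j : Fin n} (hij : i ≠ j)
    (h : l i = l j) (ks : Multiset ℕ) : alternantCoeff l ks = 0 := by
  have hanti := alternantCoeff_comp_perm l (swap i j) ks
  rw [show l ∘ swap i j = l from funext (apply_swap_eq_self h), Perm.sign_swap hij] at hanti
  rw [Units.val_neg, Units.val_one] at hanti
  omega

end Alternant

section Maya

variable {n : ℕ}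

/-- The numbering of `Fin n ⊕ Fin n` that lists the left summand in decreasing order from `n - 1`
to `0` and the right summand in increasing order from `n` to `2 * n - 1`. -/
def mayaValue : Fin n ⊕ Fin n ≃ Fin (n + n) :=
  (Fin.revPerm.sumCongr (Equiv.refl _)).trans finSumFinEquiv

lemma val_mayaValue_inl (i : Fin n) : (mayaValue (.inl i) : ℕ) = n - 1 - i := by
  simp [mayaValue, Fin.val_rev, Nat.sub_sub, add_comm]

lemma val_mayaValue_inr (j : Fin n) : (mayaValue (.inr j) : ℕ) = n + j := by
  simp [mayaValue, add_comm]

lemma val_mayaValue_swap (z : Fin n ⊕ Fin n) :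
    (mayaValue z.swap : ℕ) + mayaValue z + 1 = n + n := by
  rcases z with i | j
  · rw [Sum.swap_inl, val_mayaValue_inl, val_mayaValue_inr]; omega
  · rw [Sum.swap_inr, val_mayaValue_inl, val_mayaValue_inr]; omega

/-- The alternant coefficient at the exponents which `σ` puts on the left summand. Exchanging the
summands passes to the complementary exponents, reflected in `[0, 2 * n)`. -/
noncomputable def mayaCoeff (σ : Perm (Fin n ⊕ Fin n)) (ks : Multiset ℕ) : ℤ :=
  alternantCoeff (fun i => (mayaValue (σ (.inl i)) : ℕ)) ks

lemma mayaCoeff_zero (σ : Perm (Fin n ⊕ Fin n)) : mayaCoeff σ 0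
    = ∑ w : Perm (Fin n), if ∀ i, σ (.inl i) = .inl (w i) then (Perm.sign w : ℤ) else 0 := by
  rw [mayaCoeff, alternantCoeff_zero]
  refine Finset.sum_congr rfl fun w _ => if_congr ?_ rfl rfl
  rw [funext_iff]
  refine forall_congr' fun i => ?_
  rw [← val_mayaValue_inl, Fin.val_inj, mayaValue.apply_eq_iff_eq, eq_comm]

lemma mayaCoeff_sumCongr_zero (w v : Perm (Fin n)) :
    mayaCoeff (w.sumCongr v) 0 = Perm.sign w := by
  simp only [mayaCoeff_zero, Perm.sumCongr_apply, Sum.map_inl, Sum.inl.injEq, ← Equiv.ext_iff,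
    Finset.sum_ite_eq, Finset.mem_univ, if_true]

lemma exists_eq_sumCongr_of_mayaCoeff_zero_ne {σ : Perm (Fin n ⊕ Fin n)} (h : mayaCoeff σ 0 ≠ 0) :
    ∃ w v : Perm (Fin n), σ = w.sumCongr v := by
  rw [mayaCoeff_zero] at h
  obtain ⟨w, -, hw⟩ := Finset.exists_ne_zero_of_sum_ne_zero h
  have hw := of_not_not fun h => hw (if_neg h)
  obtain ⟨⟨w', v⟩, rfl⟩ := Perm.mem_sumCongrHom_range_of_perm_mapsTo_inl (σ := σ) <| by
    rintro _ ⟨i, rfl⟩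
    exact ⟨w i, (hw i).symm⟩
  exact ⟨w', v, rfl⟩

lemma permCongr_sumComm_sumCongr {α : Type*} (w v : Perm α) :
    (sumComm α α).permCongr (w.sumCongr v) = v.sumCongr w := by
  ext (i | i) <;> simp

lemma mayaCoeff_zero_eq_sign_mul (σ : Perm (Fin n ⊕ Fin n)) :
    mayaCoeff σ 0 = Perm.sign σ * mayaCoeff ((sumComm _ _).permCongr σ) 0 := by
  by_cases h : ∃ w v : Perm (Fin n), σ = w.sumCongr v
  · obtain ⟨w, v, rfl⟩ := h
    rw [permCongr_sumComm_sumCongr, mayaCoeff_sumCongr_zero, mayaCoeff_sumCongr_zero,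
      Perm.sign_sumCongr, Units.val_mul, mul_assoc, intCast_sign_mul_self, mul_one]
  · have hσ : mayaCoeff σ 0 = 0 := by
      contrapose! h
      exact exists_eq_sumCongr_of_mayaCoeff_zero_ne h
    have hσ' : mayaCoeff ((sumComm _ _).permCongr σ) 0 = 0 := by
      contrapose! h
      obtain ⟨w, v, hwv⟩ := exists_eq_sumCongr_of_mayaCoeff_zero_ne h
      refine ⟨v, w, ((sumComm _ _).permCongr).injective ?_⟩
      rw [hwv, permCongr_sumComm_sumCongr]
    rw [hσ, hσ', mul_zero]

lemma alternantCoeff_update_sub_of_apply_inr (σ : Perm (Fin n ⊕ Fin n)) {k : ℕ} {i j : Fin n}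
    (h : (mayaValue (σ (.inl i)) : ℕ) = mayaValue (σ (.inr j)) + k) (ks : Multiset ℕ) :
    alternantCoeff (Function.update (fun i => (mayaValue (σ (.inl i)) : ℕ)) i
      (mayaValue (σ (.inl i)) - k)) ks = mayaCoeff (σ * swap (.inl i) (.inr j)) ks := by
  rw [mayaCoeff]
  congr 1
  ext i'
  rcases eq_or_ne i' i with rfl | hi
  · simp [h]
  · rw [Function.update_of_ne hi, Perm.mul_apply,
      swap_apply_of_ne_of_ne (Sum.inl_injective.ne hi) Sum.inl_ne_inr]

lemma mayaCoeff_cons (σ : Perm (Fin n ⊕ Fin n)) {k : ℕ} (hk : 0 < k) (ks : Multiset ℕ) :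
    mayaCoeff σ (k ::ₘ ks) = ∑ i, ∑ j,
      if (mayaValue (σ (.inl i)) : ℕ) = mayaValue (σ (.inr j)) + k
      then mayaCoeff (σ * swap (.inl i) (.inr j)) ks else 0 := by
  rw [mayaCoeff, alternantCoeff_cons]
  refine Finset.sum_congr rfl fun i _ => ?_
  have value_eq {y z} (h : (mayaValue (σ y) : ℕ) = mayaValue (σ z)) : y = z :=
    σ.injective (mayaValue.injective (Fin.ext h))
  split_ifs with hki
  · obtain ⟨y, hy⟩ : ∃ y, (mayaValue (σ y) : ℕ) = mayaValue (σ (.inl i)) - k :=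
      ⟨σ.symm (mayaValue.symm ⟨mayaValue (σ (.inl i)) - k, by omega⟩), by simp⟩
    rcases y with i' | j
    · have hne : i' ≠ i := by rintro rfl; omega
      rw [alternantCoeff_eq_zero_of_apply_eq hne.symm (by simp [hne, hy])]
      refine (Finset.sum_eq_zero fun j _ => if_neg fun hj => ?_).symm
      exact Sum.inl_ne_inr (value_eq (y := .inl i') (z := .inr j) (by omega))
    · rw [Finset.sum_eq_single j _ (by simp), if_pos (by omega)]
      · exact alternantCoeff_update_sub_of_apply_inr σ (by omega) ks
      · refine fun j' _ hne => if_neg fun hj' => hne (Sum.inr_injective (α := Fin n) ?_)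
        exact value_eq (by omega)
  · exact (Finset.sum_eq_zero fun j _ => if_neg (by omega)).symm

lemma permCongr_sumComm_mul_swap (σ : Perm (Fin n ⊕ Fin n)) (i j : Fin n) :
    (sumComm _ _).permCongr (σ * swap (.inl i) (.inr j))
      = (sumComm _ _).permCongr σ * swap (.inl j) (.inr i) := by
  have hswap : (sumComm (Fin n) (Fin n)).permCongr (swap (.inl i) (.inr j))
      = swap (.inl j) (.inr i) := by
    rw [permCongr_def, symm_trans_swap_trans, swap_comm]
    rfl
  rw [← permCongrHom_coe, map_mul, permCongrHom_coe, hswap]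

/-- Passing to the complement of the set of beta numbers multiplies the coefficient by a sign, as
removing a strip from a diagram removes the transposed strip from the transposed diagram. -/
lemma mayaCoeff_eq_sign_mul (σ : Perm (Fin n ⊕ Fin n)) {ks : Multiset ℕ} (hks : ∀ k ∈ ks, 0 < k) :
    mayaCoeff σ ks = Perm.sign σ * (-1) ^ ks.card * mayaCoeff ((sumComm _ _).permCongr σ) ks := by
  induction ks using Multiset.induction generalizing σ with
  | empty => rw [Multiset.card_zero, pow_zero, mul_one, mayaCoeff_zero_eq_sign_mul]
  | cons k ks ih =>
    have hk : 0 < k := hks k (Multiset.mem_cons_self k ks)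
    rw [mayaCoeff_cons σ hk, mayaCoeff_cons _ hk, Finset.sum_comm, Finset.mul_sum]
    refine Finset.sum_congr rfl fun j _ => ?_
    rw [Finset.mul_sum]
    refine Finset.sum_congr rfl fun i _ => ?_
    rw [mul_ite, mul_zero, ih _ fun k' hk' => hks k' (Multiset.mem_cons_of_mem hk'),
      permCongr_sumComm_mul_swap, Perm.sign_mul, Perm.sign_swap Sum.inl_ne_inr, Multiset.card_cons]
    have hi : (mayaValue ((sumComm _ _).permCongr σ (.inr i)) : ℕ) + mayaValue (σ (.inl i)) + 1
        = n + n := by simpa using val_mayaValue_swap (σ (.inl i))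
    have hj : (mayaValue ((sumComm _ _).permCongr σ (.inl j)) : ℕ) + mayaValue (σ (.inr j)) + 1
        = n + n := by simpa using val_mayaValue_swap (σ (.inr j))
    refine if_congr (by omega) ?_ rfl
    push_cast
    ring

end Maya

section Conjugate

variable {n : ℕ} {lam : Fin n → ℕ}

/-- The conjugate partition: the column lengths of the diagram with row lengths `lam`. -/
def conjugate (lam : Fin n → ℕ) (j : Fin n) : ℕ := Finset.card {i | (j : ℕ) < lam i}

lemma antitone_conjugate (lam : Fin n → ℕ) : Antitone (conjugate lam) := fun _ _ hij =>
  Finset.card_le_card (Finset.monotone_filter_right _ fun _ _ h => (Fin.le_def.1 hij).trans_lt h)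

lemma lt_conjugate_iff (hanti : Antitone lam) (i j : Fin n) :
    (i : ℕ) < conjugate lam j ↔ (j : ℕ) < lam i := by
  constructor <;> intro h
  · by_contra! hle
    refine h.not_ge ((Finset.card_le_card (t := Finset.Iio i) fun i' hi' => ?_).trans_eq
      (Fin.card_Iio i))
    rw [Finset.mem_filter_univ] at hi'
    exact Finset.mem_Iio.2 (lt_of_not_ge fun hii' => (hi'.trans_le ((hanti hii').trans hle)).false)
  · refine (Fin.card_Iic i).symm.le.trans (Finset.card_le_card fun i' hi' => ?_)
    exact Finset.mem_filter_univ _ |>.2 (h.trans_le (hanti (Finset.mem_Iic.1 hi')))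

lemma conjugate_le (lam : Fin n → ℕ) (j : Fin n) : conjugate lam j ≤ n :=
  (Finset.card_le_univ _).trans_eq (Fintype.card_fin n)

lemma sum_conjugate_mul {R : Type*} [CommSemiring R] (hle : ∀ i, lam i ≤ n) (F : ℕ → R) :
    ∑ j, (conjugate lam j : R) * F j = ∑ i, ∑ t ∈ Finset.range (lam i), F t := by
  simp only [conjugate, Finset.card_filter, Nat.cast_sum, Finset.sum_mul]
  rw [Finset.sum_comm]
  refine Finset.sum_congr rfl fun i _ => ?_
  rw [Fin.sum_univ_eq_sum_range fun j => ((if j < lam i then 1 else 0 : ℕ) : R) * F j,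
    ← Finset.sum_subset (Finset.range_subset_range.2 (hle i))]
  · exact Finset.sum_congr rfl fun t ht => by
      rw [if_pos (Finset.mem_range.1 ht), Nat.cast_one, one_mul]
  · intro t _ ht
    rw [if_neg (mt Finset.mem_range.2 ht), Nat.cast_zero, zero_mul]

lemma sum_conjugate_mul_odd (hle : ∀ i, lam i ≤ n) :
    ∑ j, (conjugate lam j : ℤ) * (2 * j + 1) = ∑ i, (lam i : ℤ) ^ 2 := by
  have hodd (m : ℕ) : ∑ t ∈ Finset.range m, (2 * t + 1 : ℤ) = (m : ℤ) ^ 2 := by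
    induction m with
    | zero => rfl
    | succ m ih => rw [Finset.sum_range_succ, ih]; push_cast; ring
  simpa only [hodd] using sum_conjugate_mul hle fun t => (2 * t + 1 : ℤ)

lemma le_of_sum_eq (hsum : ∑ i, lam i = n) (i : Fin n) : lam i ≤ n :=
  hsum ▸ Finset.single_le_sum (fun _ _ => Nat.zero_le _) (Finset.mem_univ i)

end Conjugate

section Dominance

variable {n : ℕ} {lam mu : Fin n → ℕ}

/-- Dominance order on sequences, tested against all antitone integer weights. -/
def Dominates (lam mu : Fin n → ℕ) : Prop :=
  ∀ c : Fin n → ℤ, Antitone c → ∑ i, (mu i : ℤ) * c i ≤ ∑ i, (lam i : ℤ) * c i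

lemma Dominates.eq_of_sum_sq_le (h : Dominates lam mu) (hmu : Antitone mu)
    (hsq : ∑ i, (lam i : ℤ) ^ 2 ≤ ∑ i, (mu i : ℤ) ^ 2) : lam = mu := by
  have hcross := h (fun i => (mu i : ℤ)) fun _ _ hij => Nat.cast_le.2 (hmu hij)
  have hexpand : ∑ i, ((lam i : ℤ) - mu i) ^ 2
      = ∑ i, (lam i : ℤ) ^ 2 - 2 * ∑ i, (lam i : ℤ) * mu i + ∑ i, (mu i : ℤ) ^ 2 := by
    rw [Finset.mul_sum, ← Finset.sum_sub_distrib, ← Finset.sum_add_distrib]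
    exact Finset.sum_congr rfl fun i _ => by ring
  simp only [← sq] at hcross
  have hzero : ∑ i, ((lam i : ℤ) - mu i) ^ 2 = 0 :=
    le_antisymm (by linarith) (Finset.sum_nonneg fun i _ => sq_nonneg _)
  rw [Finset.sum_eq_zero_iff_of_nonneg fun i _ => sq_nonneg _] at hzero
  funext i
  exact_mod_cast sub_eq_zero.1 (pow_eq_zero_iff two_ne_zero |>.1 (hzero i (Finset.mem_univ i)))

lemma Dominates.antisymm (h : Dominates lam mu) (h' : Dominates mu lam) (hmu : Antitone mu)
    (hlam : Antitone lam) : lam = mu := by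
  refine h.eq_of_sum_sq_le hmu ?_
  have h₁ := h' (fun i => (lam i : ℤ)) fun _ _ hij => Nat.cast_le.2 (hlam hij)
  have h₂ := h' (fun i => (mu i : ℤ)) fun _ _ hij => Nat.cast_le.2 (hmu hij)
  simp only [sq]
  refine h₁.trans (le_of_eq_of_le ?_ h₂)
  exact Finset.sum_congr rfl fun i _ => mul_comm _ _

/-- The weights `-(2 j + 1)` turn dominance of the conjugates into a comparison of
`∑ i, lam i ^ 2` and `∑ i, mu i ^ 2`. -/
lemma Dominates.eq_of_conjugate (h : Dominates lam mu)
    (h' : Dominates (conjugate lam) (conjugate mu)) (hmu : Antitone mu)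
    (hlam_le : ∀ i, lam i ≤ n) (hmu_le : ∀ i, mu i ≤ n) : lam = mu := by
  refine h.eq_of_sum_sq_le hmu ?_
  have hodd := h' (fun j => -(2 * j + 1 : ℤ)) fun i j hij => by
    have := Fin.le_def.1 hij
    dsimp only
    omega
  simp only [mul_neg, Finset.sum_neg_distrib, sum_conjugate_mul_odd hlam_le,
    sum_conjugate_mul_odd hmu_le] at hodd
  exact neg_le_neg_iff.1 hodd

lemma sum_apply_eq_sum_content_mul {α ι : Type*} [Fintype α] [Fintype ι] [DecidableEq ι]
    (f : α → ι) (c : ι → ℤ) : ∑ x, c (f x) = ∑ i, (content f i : ℤ) * c i := by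
  rw [← Finset.sum_fiberwise _ f]
  refine Finset.sum_congr rfl fun i _ => ?_
  rw [Finset.sum_congr rfl fun x hx => by rw [(Finset.mem_filter.1 hx).2], Finset.sum_const,
    nsmul_eq_mul, content]

lemma dominates_of_content_add_eq_betaNumber {f : Fin n → Fin n} {w : Perm (Fin n)}
    (hf : Dominates lam (content f))
    (hw : (fun i => content f i + (n - 1 - w i)) = betaNumber mu) : Dominates lam mu := by
  intro c hc
  have hdelta : Antitone fun i : Fin n => ((n - 1 - i : ℕ) : ℤ) := fun i j hij => by
    have := Fin.le_def.1 hij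
    dsimp only
    omega
  have hrearrange := (hdelta.monovary hc).sum_comp_perm_mul_le_sum_mul (σ := w)
  have hsum : ∑ i, (content f i : ℤ) * c i + ∑ i, ((n - 1 - w i : ℕ) : ℤ) * c i
      = ∑ i, (mu i : ℤ) * c i + ∑ i : Fin n, ((n - 1 - i : ℕ) : ℤ) * c i := by
    rw [← Finset.sum_add_distrib, ← Finset.sum_add_distrib]
    refine Finset.sum_congr rfl fun i _ => ?_
    rw [← add_mul, ← add_mul]
    congr 1
    exact_mod_cast congrFun hw i
  have := hf c hc
  linarith

end Dominance

section Twist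

variable {n : ℕ} {mu : Fin n → ℕ}

lemma betaNumber_injective (hmu : Antitone mu) : Function.Injective (betaNumber mu) := by
  refine (StrictAnti.injective fun i j hij => ?_)
  have := hmu hij.le
  have := Fin.lt_def.1 hij
  simp only [betaNumber]
  omega

lemma exists_mayaValue_eq_betaNumber (hmu : Antitone mu) (hsum : ∑ i, mu i = n) :
    ∃ σ : Perm (Fin n ⊕ Fin n), (∀ i, (mayaValue (σ (.inl i)) : ℕ) = betaNumber mu i) ∧
      ∀ j, (mayaValue ((sumComm _ _).permCongr σ (.inl j)) : ℕ) = betaNumber (conjugate mu) j := by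
  have exists_value {nu : Fin n → ℕ} (h : ∀ i, nu i ≤ n) (i : Fin n) :
      ∃ z, (mayaValue (n := n) z : ℕ) = betaNumber nu i :=
    ⟨mayaValue.symm ⟨betaNumber nu i, by have := h i; simp only [betaNumber]; omega⟩, by simp⟩
  choose z hz using exists_value (le_of_sum_eq hsum)
  choose y hy using exists_value (conjugate_le mu)
  have hdisj (i j : Fin n) : z i ≠ (y j).swap := fun h => by
    have hval := val_mayaValue_swap (y j)
    rw [← h, hz, hy] at hval
    have := lt_conjugate_iff hmu i j
    simp only [betaNumber] at hval
    omega
  have hinj : Function.Injective (Sum.elim z (Sum.swap ∘ y)) := by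
    refine Function.Injective.sumElim (fun i j h => ?_) (fun i j h => ?_) hdisj
    · exact betaNumber_injective hmu (by rw [← hz, ← hz, h])
    · refine betaNumber_injective (antitone_conjugate mu) ?_
      rw [← hy, ← hy, Sum.swap_leftInverse.injective h]
  exact ⟨Equiv.ofBijective _ (Finite.injective_iff_bijective.1 hinj), by simp [hz], by simp [hy]⟩

lemma neg_one_pow_card_parts_partition {α : Type*} [Fintype α] [DecidableEq α] (g : Perm α) :
    (-1 : ℤ) ^ g.partition.parts.card = (-1) ^ Fintype.card α * Perm.sign g := by
  have hle : g.support.card ≤ Fintype.card α := Finset.card_le_univ _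
  obtain ⟨m, hm⟩ := Nat.exists_eq_add_of_le hle
  rw [Perm.sign_of_cycleType, Perm.parts_partition, Multiset.card_add, Multiset.card_replicate, hm,
    Perm.sum_cycleType, Nat.add_sub_cancel_left]
  push_cast
  calc (-1 : ℤ) ^ (g.cycleType.card + m)
      = ((-1) ^ g.support.card * (-1) ^ g.support.card) * (-1) ^ (g.cycleType.card + m) := by
        rw [← mul_pow, neg_one_mul, neg_neg, one_pow, one_mul]
    _ = _ := by ring

lemma exists_frobChar_eq_sign_mul (hmu : Antitone mu) (hsum : ∑ i, mu i = n) :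
    ∃ s : ℤ, ∀ g : Perm (Fin n), frobChar n mu g.partition.parts
      = s * (Perm.sign g * alternantCoeff (betaNumber (conjugate mu)) g.partition.parts) := by
  obtain ⟨σ, hleft, hright⟩ := exists_mayaValue_eq_betaNumber hmu hsum
  refine ⟨Perm.sign σ * (-1) ^ Fintype.card (Fin n), fun g => ?_⟩
  have h := mayaCoeff_eq_sign_mul σ fun k hk => g.partition.parts_pos hk
  simp only [mayaCoeff, hleft, hright] at h
  rw [frobChar_eq_alternantCoeff, h, neg_one_pow_card_parts_partition]
  ring

end Twist

lemma sum_le_sum_of_antitone_of_isLowerSet {ι M : Type*} [LinearOrder ι] [AddCommGroup M]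
    [LinearOrder M] [IsOrderedAddMonoid M] {s t : Finset ι} (hcard : s.card = t.card)
    (ht : IsLowerSet (t : Set ι)) {c : ι → M} (hc : Antitone c) :
    ∑ i ∈ s, c i ≤ ∑ i ∈ t, c i := by
  rw [← Finset.sum_sdiff_le_sum_sdiff]
  have hcard' : (s \ t).card = (t \ s).card := Finset.card_sdiff_comm hcard
  rcases (s \ t).eq_empty_or_nonempty with h | h
  · rw [h, Finset.card_empty, eq_comm, Finset.card_eq_zero] at hcard'
    rw [h, hcard']
  · obtain ⟨v, hv, hmax⟩ := Finset.exists_max_image (s \ t) c h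
    calc ∑ i ∈ s \ t, c i ≤ (s \ t).card • c v := Finset.sum_le_card_nsmul _ _ _ hmax
      _ = (t \ s).card • c v := by rw [hcard']
      _ ≤ ∑ i ∈ t \ s, c i := Finset.card_nsmul_le_sum _ _ _ fun u hu => hc <| by
        rw [Finset.mem_sdiff] at hu hv
        exact (not_le.1 fun huv => hv.2 (ht huv hu.1)).le

/-- A bijective filling of the Young diagram with row lengths `lam`: each entry is sent to its box
`(row, column)`. No monotonicity is required. -/
abbrev Tableau {n : ℕ} (lam : Fin n → ℕ) := Fin n ≃ {b : Fin n × Fin n // (b.2 : ℕ) < lam b.1}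

namespace Tableau

variable {n : ℕ} {lam : Fin n → ℕ}

lemma card_boxes (hle : ∀ i, lam i ≤ n) :
    Fintype.card {b : Fin n × Fin n // (b.2 : ℕ) < lam b.1} = ∑ i, lam i := by
  rw [Fintype.card_subtype, Finset.card_filter, Fintype.sum_prod_type]
  refine Finset.sum_congr rfl fun i _ => ?_
  rw [← Finset.card_filter]
  exact Fin.card_filter_val_lt.trans (min_eq_right (hle i))

lemma nonempty_of_sum_eq (hsum : ∑ i, lam i = n) : Nonempty (Tableau lam) :=
  ⟨(Fintype.equivFinOfCardEq ((card_boxes (le_of_sum_eq hsum)).trans hsum)).symm⟩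

variable (T : Tableau lam)

/-- The row containing an entry. -/
def row (x : Fin n) : Fin n := (T x).1.1

/-- The column containing an entry. -/
def col (x : Fin n) : Fin n := (T x).1.2

variable {T}

lemma eq_of_row_eq_of_col_eq {x y : Fin n} (hrow : T.row x = T.row y) (hcol : T.col x = T.col y) :
    x = y :=
  T.injective (Subtype.ext (Prod.ext hrow hcol))

lemma exists_row_eq_col_eq {i j : Fin n} (h : (j : ℕ) < lam i) : ∃ x, T.row x = i ∧ T.col x = j :=
  ⟨T.symm ⟨(i, j), h⟩, by simp [row], by simp [col]⟩

lemma col_lt (x : Fin n) : (T.col x : ℕ) < lam (T.row x) := (T x).2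

/-- Reflection of a tableau in the main diagonal. -/
def transpose (T : Tableau lam) (hanti : Antitone lam) : Tableau (conjugate lam) :=
  T.trans ((prodComm _ _).subtypeEquiv fun b => (lt_conjugate_iff hanti b.1 b.2).symm)

lemma content_row (hle : ∀ i, lam i ≤ n) : content T.row = lam := by
  funext i
  rw [content, ← min_eq_right (hle i), ← Fin.card_filter_val_lt]
  refine Finset.card_bij (fun x _ => T.col x) (fun x hx => ?_) (fun x hx y hy h => ?_)
    fun j hj => ?_
  · rw [Finset.mem_filter_univ] at hx ⊢
    exact hx ▸ T.col_lt x
  · rw [Finset.mem_filter_univ] at hx hy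
    exact eq_of_row_eq_of_col_eq (hx.trans hy.symm) h
  · rw [Finset.mem_filter_univ] at hj
    obtain ⟨x, hrow, hcol⟩ := exists_row_eq_col_eq (T := T) hj
    exact ⟨x, (Finset.mem_filter_univ _).2 hrow, hcol⟩

lemma sum_apply_le_sum_row (hanti : Antitone lam) {f : Fin n → Fin n}
    (hf : ∀ x y, T.col x = T.col y → f x = f y → x = y) {c : Fin n → ℤ} (hc : Antitone c) :
    ∑ x, c (f x) ≤ ∑ x, c (T.row x) := by
  rw [← Finset.sum_fiberwise _ T.col, ← Finset.sum_fiberwise _ T.col fun x => c (T.row x)]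
  refine Finset.sum_le_sum fun j _ => ?_
  have hf_inj : Set.InjOn f ({x | T.col x = j} : Finset (Fin n)) := fun x hx y hy =>
    hf x y ((Finset.mem_filter.1 hx).2.trans (Finset.mem_filter.1 hy).2.symm)
  have hrow_inj : Set.InjOn T.row ({x | T.col x = j} : Finset (Fin n)) := fun x hx y hy h =>
    eq_of_row_eq_of_col_eq h ((Finset.mem_filter.1 hx).2.trans (Finset.mem_filter.1 hy).2.symm)
  rw [← Finset.sum_image hf_inj, ← Finset.sum_image hrow_inj]
  refine sum_le_sum_of_antitone_of_isLowerSet ?_ ?_ hc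
  · rw [Finset.card_image_of_injOn hf_inj, Finset.card_image_of_injOn hrow_inj]
  · intro i i' hi' hi
    simp only [Finset.coe_image, Finset.coe_filter, Finset.mem_univ, true_and] at hi ⊢
    obtain ⟨x, rfl, rfl⟩ := hi
    obtain ⟨y, hrow, hcol⟩ := exists_row_eq_col_eq (T := T) ((T.col_lt x).trans_le (hanti hi'))
    exact ⟨y, hcol, hrow⟩

lemma dominates_content (hanti : Antitone lam) (hle : ∀ i, lam i ≤ n) {f : Fin n → Fin n}
    (hf : ∀ x y, T.col x = T.col y → f x = f y → x = y) : Dominates lam (content f) := by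
  intro c hc
  calc ∑ i, (content f i : ℤ) * c i = ∑ x, c (f x) := (sum_apply_eq_sum_content_mul f c).symm
    _ ≤ ∑ x, c (T.row x) := sum_apply_le_sum_row hanti hf hc
    _ = ∑ i, (lam i : ℤ) * c i := by rw [sum_apply_eq_sum_content_mul, content_row hle]

end Tableau

/-! ### Young symmetrizers and class functions -/

section YoungSymmetrizer

variable {α ι κ : Type*} {r : α → ι} {c : α → κ}

variable [Fintype α] [DecidableEq α] [DecidableEq ι] [DecidableEq κ]

/-- The coefficient of the permutation `h` in the Young symmetrizer of the filling with row map `r`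
and column map `c`, i.e. in `∑ sign q • (p * q)` over row-preserving `p` and column-preserving `q`.
-/
def youngSymmetrizer (r : α → ι) (c : α → κ) (h : Perm α) : ℤ :=
  ∑ p : Perm α, if r ∘ p = r ∧ c ∘ ⇑(p⁻¹ * h) = c then (Perm.sign (p⁻¹ * h) : ℤ) else 0

lemma youngSymmetrizer_one (hrc : ∀ x y, r x = r y → c x = c y → x = y) :
    youngSymmetrizer r c 1 = 1 := by
  have eq_one {p : Perm α} (hr : r ∘ p = r) (hc : c ∘ ⇑p⁻¹ = c) : p = 1 :=
    Perm.ext fun x => hrc _ _ (congrFun hr x) (congrFun (comp_inv_eq_self_iff.1 hc) x)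
  rw [youngSymmetrizer, Finset.sum_eq_single 1]
  · simp
  · intro p _ hp
    rw [mul_one]
    exact if_neg fun h => hp (eq_one h.1 h.2)
  · simp

lemma youngSymmetrizer_mul_swap {x y : α} (hxy : x ≠ y) (h : c x = c y) (σ : Perm α) :
    youngSymmetrizer r c (σ * swap x y) = -youngSymmetrizer r c σ := by
  rw [youngSymmetrizer, youngSymmetrizer, ← Finset.sum_neg_distrib]
  refine Finset.sum_congr rfl fun p _ => ?_
  have hsign : (Perm.sign (p⁻¹ * σ * swap x y) : ℤ) = -Perm.sign (p⁻¹ * σ) := by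
    rw [Perm.sign_mul, Perm.sign_swap hxy, mul_neg, mul_one, Units.val_neg]
  simp only [← mul_assoc, comp_mul_swap_eq_self_iff h, hsign]
  rw [apply_ite Neg.neg, neg_zero]

lemma youngSymmetrizer_swap_mul {x y : α} (h : r x = r y) (σ : Perm α) :
    youngSymmetrizer r c (swap x y * σ) = youngSymmetrizer r c σ := by
  refine Fintype.sum_equiv (Equiv.mulLeft (swap x y)) _ _ fun p => ?_
  have hr : r ∘ ⇑(swap x y * p) = r ↔ r ∘ p = r := by
    rw [Perm.coe_mul, ← Function.comp_assoc, comp_swap_eq_self h]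
  simp only [Equiv.coe_mulLeft, hr, mul_inv_rev, swap_inv, mul_assoc]

lemma youngSymmetrizer_eq_sign_mul (r : α → ι) (c : α → κ) (σ : Perm α) :
    youngSymmetrizer r c σ = Perm.sign σ * youngSymmetrizer c r σ⁻¹ := by
  rw [youngSymmetrizer, youngSymmetrizer, Finset.mul_sum]
  refine Fintype.sum_equiv (Equiv.mulLeft σ⁻¹) _ _ fun p => ?_
  have hinv : (σ⁻¹ * p)⁻¹ * σ⁻¹ = p⁻¹ := by group
  have hsign : (Perm.sign (p⁻¹ * σ) : ℤ) = Perm.sign σ * Perm.sign p⁻¹ := by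
    rw [Perm.sign_mul, Units.val_mul, mul_comm]
  have hcol : c ∘ ⇑(p⁻¹ * σ) = c ↔ c ∘ ⇑(σ⁻¹ * p) = c := by
    rw [← comp_inv_eq_self_iff, mul_inv_rev, inv_inv]
  rw [Equiv.coe_mulLeft, hinv, hsign, mul_ite, mul_zero]
  exact if_congr ((and_congr comp_inv_eq_self_iff.symm hcol).trans and_comm) rfl rfl

lemma sum_youngSymmetrizer_mul_eq_zero_of_mul_swap {u : Perm α → ℤ} {x y : α} (hxy : x ≠ y)
    (h : c x = c y) (hu : ∀ σ, u (σ * swap x y) = u σ) :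
    ∑ σ, youngSymmetrizer r c σ * u σ = 0 := by
  rw [← self_eq_neg, ← Finset.sum_neg_distrib]
  refine Fintype.sum_equiv (Equiv.mulRight (swap x y)) _ _ fun σ => ?_
  rw [Equiv.coe_mulRight, youngSymmetrizer_mul_swap hxy h, hu, neg_mul, neg_neg]

lemma sum_youngSymmetrizer_mul_eq_zero_of_swap_mul {u : Perm α → ℤ} {x y : α}
    (h : r x = r y) (hu : ∀ σ, u (swap x y * σ) = -u σ) :
    ∑ σ, youngSymmetrizer r c σ * u σ = 0 := by
  rw [← self_eq_neg, ← Finset.sum_neg_distrib]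
  refine Fintype.sum_equiv (Equiv.mulLeft (swap x y)) _ _ fun σ => ?_
  rw [Equiv.coe_mulLeft, youngSymmetrizer_swap_mul h, hu, mul_neg, neg_neg]

/-- The class function obtained by averaging the Young symmetrizer over conjugates, without the
factor `1 / (card α)!`. For a Young tableau it is a multiple of the irreducible character of the
shape. -/
def youngCharacter (r : α → ι) (c : α → κ) (π : Perm α) : ℤ :=
  ∑ g : Perm α, youngSymmetrizer r c (g * π * g⁻¹)

lemma youngCharacter_one (hrc : ∀ x y, r x = r y → c x = c y → x = y) :
    youngCharacter r c 1 = (Fintype.card α).factorial := by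
  simp [youngCharacter, youngSymmetrizer_one hrc, Fintype.card_perm]

lemma youngCharacter_eq_of_isConj {π π' : Perm α} (h : IsConj π π') :
    youngCharacter r c π = youngCharacter r c π' := by
  obtain ⟨s, rfl⟩ := isConj_iff.1 h
  refine (Fintype.sum_equiv (Equiv.mulRight s) _ _ fun g => ?_).symm
  rw [Equiv.coe_mulRight, mul_inv_rev]
  simp only [mul_assoc]

lemma youngCharacter_eq_sum_inv (π : Perm α) :
    youngCharacter r c π = ∑ g : Perm α, youngSymmetrizer r c (g * π⁻¹ * g⁻¹) :=
  youngCharacter_eq_of_isConj (Perm.isConj_iff_cycleType_eq.2 (Perm.cycleType_inv π).symm)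

lemma sum_youngCharacter_mul {u : Perm α → ℤ} (hu : ∀ ⦃π π'⦄, IsConj π π' → u π = u π') :
    ∑ π, youngCharacter r c π * u π
      = (Fintype.card α).factorial * ∑ σ, youngSymmetrizer r c σ * u σ := by
  have hconj (g : Perm α) : ∑ π, youngSymmetrizer r c (g * π * g⁻¹) * u π
      = ∑ σ, youngSymmetrizer r c σ * u σ :=
    Fintype.sum_equiv (MulAut.conj g).toEquiv _ _ fun π => by
      congr 1
      exact hu (isConj_iff.2 ⟨g, rfl⟩)
  simp only [youngCharacter, Finset.sum_mul]
  rw [Finset.sum_comm]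
  simp only [hconj, Finset.sum_const, Finset.card_univ, Fintype.card_perm, nsmul_eq_mul]

end YoungSymmetrizer

lemma exists_content_add_of_sum_youngSymmetrizer_mul_ne_zero {n : ℕ} {ι κ : Type*}
    [DecidableEq ι] [DecidableEq κ] {r : Fin n → ι} {c : Fin n → κ} {l : Fin n → ℕ}
    (h : ∑ σ, youngSymmetrizer r c σ * alternantCoeff l σ.partition.parts ≠ 0) :
    ∃ (f : Fin n → Fin n) (w : Perm (Fin n)), (∀ x y, c x = c y → f x = f y → x = y) ∧
      (fun i => content f i + (n - 1 - w i)) = l := by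
  simp only [alternantCoeff_parts_partition, Finset.sum_filter, Finset.mul_sum] at h
  rw [Finset.sum_comm] at h
  obtain ⟨f, -, hf⟩ := Finset.exists_ne_zero_of_sum_ne_zero h
  have hinj : ∀ x y, c x = c y → f x = f y → x = y := by
    by_contra! hcon
    obtain ⟨x, y, hc, hfxy, hxy⟩ := hcon
    refine hf (sum_youngSymmetrizer_mul_eq_zero_of_mul_swap hxy hc fun σ => ?_)
    simp only [comp_mul_swap_eq_self_iff hfxy]
  obtain ⟨σ, -, hσ⟩ := Finset.exists_ne_zero_of_sum_ne_zero hf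
  have hsum := (ite_ne_right_iff.1 (right_ne_zero_of_mul hσ)).2
  obtain ⟨w, -, hw⟩ := Finset.exists_ne_zero_of_sum_ne_zero hsum
  exact ⟨f, w, hinj, (ite_ne_right_iff.1 hw).1⟩

namespace Tableau

variable {n : ℕ} {lam mu : Fin n → ℕ}

lemma dominates_of_sum_youngSymmetrizer_mul_ne_zero (T : Tableau lam) (hanti : Antitone lam)
    (hle : ∀ i, lam i ≤ n) (h : ∑ σ, youngSymmetrizer T.row T.col σ *
      alternantCoeff (betaNumber mu) σ.partition.parts ≠ 0) : Dominates lam mu := by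
  obtain ⟨f, w, hf, hw⟩ := exists_content_add_of_sum_youngSymmetrizer_mul_ne_zero h
  exact dominates_of_content_add_eq_betaNumber (dominates_content hanti hle hf) hw

/-- Transposing the tableau and twisting by the sign swaps `lam` and `mu` with their conjugates, so
a nonzero pairing forces dominance both ways. -/
lemma sum_youngSymmetrizer_mul_frobChar_eq_zero (T : Tableau lam) (hlam : Antitone lam)
    (hlam_sum : ∑ i, lam i = n) (hmu : Antitone mu) (hmu_sum : ∑ i, mu i = n) (hne : lam ≠ mu) :
    ∑ σ, youngSymmetrizer T.row T.col σ * frobChar n mu σ.partition.parts = 0 := by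
  by_contra h
  refine hne (Dominates.eq_of_conjugate
    (T.dominates_of_sum_youngSymmetrizer_mul_ne_zero hlam (le_of_sum_eq hlam_sum) h) ?_ hmu
    (le_of_sum_eq hlam_sum) (le_of_sum_eq hmu_sum))
  refine (T.transpose hlam).dominates_of_sum_youngSymmetrizer_mul_ne_zero
    (antitone_conjugate lam) (conjugate_le lam) fun hzero => h ?_
  obtain ⟨s, hs⟩ := exists_frobChar_eq_sign_mul hmu hmu_sum
  rw [← mul_zero s, ← hzero, Finset.mul_sum]
  refine Fintype.sum_equiv (Equiv.inv _) _ _ fun σ => ?_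
  have hpartition : σ⁻¹.partition = σ.partition :=
    Perm.partition_eq_of_isConj.1 (Perm.isConj_iff_cycleType_eq.2 (Perm.cycleType_inv σ))
  have htranspose : youngSymmetrizer (T.transpose hlam).row (T.transpose hlam).col σ⁻¹
      = youngSymmetrizer T.col T.row σ⁻¹ := rfl
  rw [Equiv.inv_apply, hpartition, htranspose, hs, youngSymmetrizer_eq_sign_mul]
  linear_combination s * youngSymmetrizer T.col T.row σ⁻¹ *
    alternantCoeff (betaNumber (conjugate mu)) σ.partition.parts * intCast_sign_mul_self σ

lemma sum_youngSymmetrizer_mul_youngCharacter_eq_zero (T : Tableau lam) (S : Tableau mu)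
    (hlam : Antitone lam) (hlam_sum : ∑ i, lam i = n) (hmu : Antitone mu)
    (hmu_sum : ∑ i, mu i = n) (hne : lam ≠ mu) :
    ∑ σ, youngSymmetrizer T.row T.col σ * youngCharacter S.row S.col σ = 0 := by
  simp only [youngCharacter_eq_sum_inv, Finset.mul_sum]
  rw [Finset.sum_comm]
  refine Finset.sum_eq_zero fun g _ => ?_
  have hconj (x y : Fin n) : g * swap x y * g⁻¹ = swap (g x) (g y) := by
    rw [mul_swap_eq_swap_mul, mul_inv_cancel_right]
  by_cases hT : ∀ x y, T.col x = T.col y → (S.row ∘ g) x = (S.row ∘ g) y → x = y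
  · by_cases hS : ∀ x y, S.col x = S.col y → (T.row ∘ ⇑g⁻¹) x = (T.row ∘ ⇑g⁻¹) y → x = y
    · have h := dominates_content hlam (le_of_sum_eq hlam_sum) hT
      have h' := dominates_content hmu (le_of_sum_eq hmu_sum) hS
      rw [content_comp_perm, content_row (le_of_sum_eq ‹_›)] at h h'
      exact (hne (h.antisymm h' hmu hlam)).elim
    · push Not at hS
      obtain ⟨x, y, hc, hr, hxy⟩ := hS
      refine sum_youngSymmetrizer_mul_eq_zero_of_swap_mul (x := g⁻¹ x) (y := g⁻¹ y) hr fun σ => ?_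
      rw [← youngSymmetrizer_mul_swap hxy hc]
      congr 1
      have hswap : g * swap (g⁻¹ x) (g⁻¹ y) * g⁻¹ = swap x y := by rw [hconj]; simp
      rw [← hswap, mul_inv_rev, swap_inv]
      group
  · push Not at hT
    obtain ⟨x, y, hc, hr, hxy⟩ := hT
    refine sum_youngSymmetrizer_mul_eq_zero_of_mul_swap hxy hc fun σ => ?_
    rw [← youngSymmetrizer_swap_mul (x := g x) (y := g y) hr (g * σ⁻¹ * g⁻¹), ← hconj, mul_inv_rev,
      swap_inv]
    congr 1
    group

end Tableau

lemma exists_eq_smul_of_orthogonal {𝕜 E ι : Type*} [RCLike 𝕜] [NormedAddCommGroup E]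
    [InnerProductSpace 𝕜 E] [Fintype ι] {V : Submodule 𝕜 E} [FiniteDimensional 𝕜 V] {v : ι → E}
    (hv : ∀ i, v i ∈ V) (hne : ∀ i, v i ≠ 0) (horth : Pairwise fun i j => inner 𝕜 (v i) (v j) = 0)
    (hcard : Module.finrank 𝕜 V ≤ Fintype.card ι) {w : E} (hw : w ∈ V) {m : ι}
    (hwm : ∀ i, i ≠ m → inner 𝕜 (v i) w = 0) : ∃ a : 𝕜, w = a • v m := by
  classical
  have hspan : Submodule.span 𝕜 (Set.range v) = V := by
    refine Submodule.eq_of_le_of_finrank_le (Submodule.span_le.2 (Set.range_subset_iff.2 hv)) ?_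
    rwa [finrank_span_eq_card (linearIndependent_of_ne_zero_of_inner_eq_zero hne horth)]
  obtain ⟨a, rfl⟩ := (Submodule.mem_span_range_iff_exists_fun 𝕜).1 (hspan ▸ hw)
  refine ⟨a m, Fintype.sum_eq_single m fun i hi => ?_⟩
  have hinner : inner 𝕜 (v i) (∑ j, a j • v j) = a i * inner 𝕜 (v i) (v i) := by
    rw [inner_sum, Fintype.sum_eq_single i fun j hj => ?_, inner_smul_right]
    rw [inner_smul_right, horth hj.symm, mul_zero]
  rw [hwm i hi, eq_comm, mul_eq_zero, or_iff_left (inner_self_ne_zero.2 (hne i))] at hinner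
  rw [hinner, zero_smul]

section CountingShapes

lemma sum_countP_lt {n : ℕ} {s : Multiset ℕ} (hs : ∀ k ∈ s, k ≤ n) :
    ∑ j : Fin n, s.countP (fun k => (j : ℕ) < k) = s.sum := by
  induction s using Multiset.induction with
  | empty => simp
  | cons a s ih =>
    simp only [Multiset.countP_cons, Multiset.sum_cons]
    rw [Finset.sum_add_distrib, ih fun k hk => hs k (Multiset.mem_cons_of_mem hk),
      ← Finset.card_filter, Fin.card_filter_val_lt, min_eq_right (hs a (s.mem_cons_self a)),
      add_comm]

lemma countP_lt_eq_add_count (s : Multiset ℕ) (a : ℕ) :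
    s.countP (a < ·) = s.countP (a + 1 < ·) + s.count (a + 1) := by
  induction s using Multiset.induction with
  | empty => simp
  | cons b s ih =>
    simp only [Multiset.countP_cons, Multiset.count_cons, ih]
    split_ifs <;> omega

lemma eq_of_countP_lt_eq {s t : Multiset ℕ} (hs : 0 ∉ s) (ht : 0 ∉ t)
    (h : ∀ a, s.countP (a < ·) = t.countP (a < ·)) : s = t := by
  ext a
  cases a with
  | zero => rw [Multiset.count_eq_zero.2 hs, Multiset.count_eq_zero.2 ht]
  | succ a =>
    have := countP_lt_eq_add_count s a
    have := countP_lt_eq_add_count t a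
    have := h a
    have := h (a + 1)
    omega

/-- The shapes with `n` boxes, as weakly decreasing sequences of `n` row lengths. -/
abbrev Shape (n : ℕ) := {lam : Fin n → ℕ // Antitone lam ∧ ∑ i, lam i = n}

instance (n : ℕ) : Finite (Shape n) :=
  Finite.of_injective (fun (l : Shape n) i => (⟨l.1 i, Nat.lt_succ_of_le (le_of_sum_eq l.2.2 i)⟩ :
    Fin (n + 1))) fun _ _ h => Subtype.ext (funext fun i => Fin.val_eq_of_eq (congrFun h i))

lemma card_partition_le_card_shape (n : ℕ) : Fintype.card n.Partition ≤ Nat.card (Shape n) := by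
  have hle (P : n.Partition) {k : ℕ} (hk : k ∈ P.parts) : k ≤ n :=
    (Multiset.single_le_sum (fun _ _ => Nat.zero_le _) k hk).trans_eq P.parts_sum
  let columnCounts (P : n.Partition) : Shape n :=
    ⟨fun j => P.parts.countP (fun k => (j : ℕ) < k),
      fun _ _ hij => by
        simp only [Multiset.countP_eq_card_filter]
        exact Multiset.card_le_card
          (Multiset.monotone_filter_right _ fun _ h => (Fin.le_def.1 hij).trans_lt h),
      (sum_countP_lt fun _ => hle P).trans P.parts_sum⟩
  rw [← Nat.card_eq_fintype_card]
  refine Nat.card_le_card_of_injective columnCounts fun P Q hPQ => Nat.Partition.ext ?_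
  refine eq_of_countP_lt_eq (fun h => (P.parts_pos h).false) (fun h => (Q.parts_pos h).false)
    fun a => ?_
  rcases lt_or_ge a n with ha | ha
  · exact congrFun (Subtype.ext_iff.1 hPQ) ⟨a, ha⟩
  · rw [Multiset.countP_eq_zero.2 fun k hk => ((hle P hk).trans ha).not_gt,
      Multiset.countP_eq_zero.2 fun k hk => ((hle Q hk).trans ha).not_gt]

end CountingShapes

section ClassFunctions

variable (α : Type*) [Fintype α] [DecidableEq α]

/-- The Euclidean space of real class functions of `Perm α`, i.e. of functions of the cycle type. -/
noncomputable def classFunctions : Submodule ℝ (EuclideanSpace ℝ (Perm α)) :=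
  LinearMap.range ((WithLp.linearEquiv 2 ℝ (Perm α → ℝ)).symm.toLinearMap ∘ₗ
    LinearMap.funLeft ℝ ℝ Perm.partition)

lemma finrank_classFunctions_le :
    Module.finrank ℝ (classFunctions α) ≤ Fintype.card (Fintype.card α).Partition :=
  (LinearMap.finrank_range_le _).trans_eq (Module.finrank_fintype_fun_eq_card ℝ)

variable {α}

lemma toLp_mem_classFunctions {u : Perm α → ℝ} (hu : ∀ ⦃π π'⦄, IsConj π π' → u π = u π') :
    WithLp.toLp 2 u ∈ classFunctions α := by
  have hfactors : u.FactorsThrough Perm.partition := fun _ _ h =>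
    hu (Perm.partition_eq_of_isConj.2 h)
  obtain ⟨e, rfl⟩ := (Function.factorsThrough_iff u).1 hfactors
  exact ⟨e, rfl⟩

end ClassFunctions

section YoungVector

variable {n : ℕ} {lam : Fin n → ℕ}

/-- The Young character of a tableau, as a vector of the Euclidean space of functions on the
symmetric group. -/
noncomputable def youngVector (T : Tableau lam) : EuclideanSpace ℝ (Perm (Fin n)) :=
  WithLp.toLp 2 fun π => (youngCharacter T.row T.col π : ℝ)

lemma youngVector_mem_classFunctions (T : Tableau lam) :
    youngVector T ∈ classFunctions (Fin n) :=
  toLp_mem_classFunctions fun _ _ h => congrArg Int.cast (youngCharacter_eq_of_isConj h)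

lemma youngVector_ne_zero (T : Tableau lam) : youngVector T ≠ 0 := by
  intro h
  have hone : (youngCharacter T.row T.col 1 : ℝ) = 0 := congrArg (· 1) h
  rw [Int.cast_eq_zero, youngCharacter_one fun _ _ => Tableau.eq_of_row_eq_of_col_eq] at hone
  exact Nat.factorial_ne_zero _ (Nat.cast_eq_zero.1 hone)

lemma inner_youngVector_eq_zero (T : Tableau lam) {u : Perm (Fin n) → ℤ}
    (hu : ∀ ⦃π π'⦄, IsConj π π' → u π = u π')
    (h : ∑ σ, youngSymmetrizer T.row T.col σ * u σ = 0) :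
    inner ℝ (youngVector T) (WithLp.toLp 2 fun π => (u π : ℝ)) = 0 := by
  have hzero : ∑ π, u π * youngCharacter T.row T.col π = 0 := by
    simp only [mul_comm (u _)]
    rw [sum_youngCharacter_mul hu, h, mul_zero]
  simp only [youngVector, EuclideanSpace.inner_toLp_toLp, dotProduct, star_trivial]
  exact_mod_cast hzero

end YoungVector

/-- The Young characters of all shapes are pairwise orthogonal and as numerous as the conjugacy
classes, and `frobChar` is orthogonal to all but one of them. -/
lemma exists_frobChar_eq_mul_youngCharacter {n : ℕ} {lam : Fin n → ℕ} (hanti : Antitone lam)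
    (hsum : ∑ i, lam i = n) : ∃ (T : Tableau lam) (a : ℝ), ∀ π : Perm (Fin n),
      (frobChar n lam π.partition.parts : ℝ) = a * youngCharacter T.row T.col π := by
  have := Fintype.ofFinite (Shape n)
  have T (l : Shape n) : Tableau l.1 := (Tableau.nonempty_of_sum_eq l.2.2).some
  have hfrob ⦃π π' : Perm (Fin n)⦄ (h : IsConj π π') :
      frobChar n lam π.partition.parts = frobChar n lam π'.partition.parts := by
    rw [Perm.partition_eq_of_isConj.1 h]
  have horth : Pairwise fun l l' => inner ℝ (youngVector (T l)) (youngVector (T l')) = 0 :=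
    fun l l' hne => inner_youngVector_eq_zero _ (fun _ _ => youngCharacter_eq_of_isConj) <|
      (T l).sum_youngSymmetrizer_mul_youngCharacter_eq_zero (T l') l.2.1 l.2.2 l'.2.1 l'.2.2
        (Subtype.coe_ne_coe.2 hne)
  have hcard : Module.finrank ℝ (classFunctions (Fin n)) ≤ Fintype.card (Shape n) := by
    refine (finrank_classFunctions_le _).trans ?_
    rw [Fintype.card_fin, ← Nat.card_eq_fintype_card (α := Shape n)]
    exact card_partition_le_card_shape n
  obtain ⟨a, ha⟩ := exists_eq_smul_of_orthogonal (m := (⟨lam, hanti, hsum⟩ : Shape n))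
    (fun l => youngVector_mem_classFunctions (T l)) (fun l => youngVector_ne_zero (T l)) horth hcard
    (toLp_mem_classFunctions fun _ _ h => congrArg Int.cast (hfrob h)) fun l hne =>
      inner_youngVector_eq_zero (T l) hfrob <|
        (T l).sum_youngSymmetrizer_mul_frobChar_eq_zero l.2.1 l.2.2 hanti hsum
          (Subtype.coe_ne_coe.2 hne)
  exact ⟨T ⟨lam, hanti, hsum⟩, a, fun π => congrArg (· π) ha⟩

/-! ### Bounding the Young character -/

section SupportPerm

variable {α : Type*}

/-- The permutation `π` restricted to the points it moves. -/
def supportPerm (π : Perm α) : Perm {x // π x ≠ x} :=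
  π.subtypePerm fun _ => π.injective.ne_iff

variable [Fintype α] [DecidableEq α] (π : Perm α)

lemma card_apply_ne_eq_sum_cycleType : Fintype.card {x // π x ≠ x} = π.cycleType.sum := by
  rw [Perm.sum_cycleType, Fintype.card_subtype, Perm.support]

lemma cycleType_supportPerm : (supportPerm π).cycleType = π.cycleType := by
  rw [← Perm.cycleType_ofSubtype, supportPerm, Perm.ofSubtype_subtypePerm _ fun _ => id]

lemma card_parts_partition_supportPerm :
    (supportPerm π).partition.parts.card = π.cycleType.card := by
  rw [Perm.parts_partition, ← Perm.sum_cycleType, cycleType_supportPerm,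
    card_apply_ne_eq_sum_cycleType, Nat.sub_self, Multiset.replicate_zero, add_zero]

lemma card_perm_fixing_ne :
    (Finset.univ.filter fun f : Perm α => ∀ x, π x ≠ x → f x = x).card
      = (Fintype.card α - π.cycleType.sum).factorial := by
  rw [← Fintype.card_subtype,
    ← Fintype.card_congr (Perm.subtypeEquivSubtypePerm fun x => π x = x), Fintype.card_perm,
    ← card_apply_ne_eq_sum_cycleType, Fintype.card_subtype_compl,
    Nat.sub_sub_self (Fintype.card_subtype_le _)]

end SupportPerm

namespace ColoredFactorization

variable {α ι κ : Type*} {π : Perm α} (F : ColoredFactorization π ι κ)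

lemma left_apply_eq_self {x : α} (hx : π x = x)
    (hF : ∀ x y, F.rowColor x = F.rowColor y → F.colColor x = F.colColor y → x = y) :
    F.left x = x := by
  have hrow : F.rowColor x = F.rowColor (F.left⁻¹ x) := by
    simpa using congrFun F.rowColor_comp (F.left⁻¹ x)
  have hcol : F.colColor (F.left⁻¹ x) = F.colColor x := by
    simpa [hx] using congrFun F.colColor_comp x
  exact (Perm.inv_eq_iff_eq.1 (hF _ _ hrow.symm hcol)).symm

/-- The restriction of a colored factorization of `π` to the points moved by `π`. -/
def restrictSupport (hF : ∀ x, π x = x → F.left x = x) :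
    ColoredFactorization (supportPerm π) ι κ where
  left := F.left.subtypePerm fun x => not_congr
    ⟨fun h => by rwa [F.left.injective (hF _ h)] at h, fun h => by rw [hF x h, h]⟩
  rowColor x := F.rowColor x
  colColor x := F.colColor x
  rowColor_comp := funext fun x => congrFun F.rowColor_comp x
  colColor_comp := funext fun x => congrFun F.colColor_comp x

end ColoredFactorization

section RelabeledFactorization

variable {α ι κ : Type*}

/-- The relabelings `g` of the filling `(r, c)`, each with a factorization of `π` whose left factor
preserves the rows and whose right factor preserves the columns of the relabeled filling. -/
abbrev RelabeledFactorization (r : α → ι) (c : α → κ) (π : Perm α) :=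
  {p : Perm α × ColoredFactorization π ι κ // p.2.rowColor = r ∘ p.1 ∧ p.2.colColor = c ∘ p.1}

namespace RelabeledFactorization

variable {r : α → ι} {c : α → κ} {π : Perm α} (hrc : ∀ x y, r x = r y → c x = c y → x = y)
include hrc

lemma left_apply_eq_self (t : RelabeledFactorization r c π) {x : α} (hx : π x = x) :
    t.1.2.left x = x := by
  refine t.1.2.left_apply_eq_self hx fun y z hrow hcol => t.1.1.injective (hrc _ _ ?_ ?_)
  · simpa only [t.2.1, Function.comp_apply] using hrow
  · simpa only [t.2.2, Function.comp_apply] using hcol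

/-- The factorization, restricted to the points moved by `π`. -/
def restrict (t : RelabeledFactorization r c π) : ColoredFactorization (supportPerm π) ι κ :=
  t.1.2.restrictSupport fun _ => t.left_apply_eq_self hrc

variable {t t' : RelabeledFactorization r c π} (h : t.restrict hrc = t'.restrict hrc)
include h

lemma left_eq_of_restrict_eq : t.1.2.left = t'.1.2.left := by
  ext x
  by_cases hx : π x = x
  · rw [t.left_apply_eq_self hrc hx, t'.left_apply_eq_self hrc hx]
  · exact congrArg Subtype.val (Perm.congr_fun (congrArg ColoredFactorization.left h) ⟨x, hx⟩)

lemma relabel_apply_eq_of_restrict_eq {x : α} (hx : π x ≠ x) : t.1.1 x = t'.1.1 x := by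
  refine hrc _ _ ?_ ?_
  · have hrow := congrFun (congrArg ColoredFactorization.rowColor h) ⟨x, hx⟩
    simpa only [restrict, ColoredFactorization.restrictSupport, t.2.1, t'.2.1,
      Function.comp_apply] using hrow
  · have hcol := congrFun (congrArg ColoredFactorization.colColor h) ⟨x, hx⟩
    simpa only [restrict, ColoredFactorization.restrictSupport, t.2.2, t'.2.2,
      Function.comp_apply] using hcol

lemma eq_of_restrict_eq (hrelabel : t.1.1 = t'.1.1) : t = t' := by
  refine Subtype.ext (Prod.ext hrelabel (ColoredFactorization.ext ?_ ?_ ?_))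
  · exact left_eq_of_restrict_eq hrc h
  · rw [t.2.1, t'.2.1, hrelabel]
  · rw [t.2.2, t'.2.2, hrelabel]

omit h

/-- Two relabelings with the same restriction differ by a permutation fixing the support of `π`. -/
lemma card_le [Fintype α] [DecidableEq α] [Finite ι] [Finite κ] :
    Nat.card (RelabeledFactorization r c π) ≤
      (Fintype.card α - π.cycleType.sum).factorial *
        Nat.card (ColoredFactorization (supportPerm π) ι κ) := by
  classical
  have := Fintype.ofFinite (RelabeledFactorization r c π)
  have := Fintype.ofFinite (ColoredFactorization (supportPerm π) ι κ)
  rw [Nat.card_eq_fintype_card, Nat.card_eq_fintype_card, ← card_perm_fixing_ne]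
  refine Finset.card_le_mul_card_image_of_maps_to (f := restrict hrc)
    (fun _ _ => Finset.mem_univ _) _ fun F _ => ?_
  obtain hempty | ⟨t₀, ht₀⟩ := (Finset.univ.filter fun t => restrict hrc t = F).eq_empty_or_nonempty
  · simp only [hempty, Finset.card_empty, Nat.zero_le]
  rw [Finset.mem_filter_univ] at ht₀
  refine Finset.card_le_card_of_injOn (fun t => t₀.1.1⁻¹ * t.1.1) (fun t ht => ?_)
    fun t ht t' ht' hmul => ?_
  · rw [Finset.mem_coe, Finset.mem_filter_univ] at ht ⊢
    intro x hx
    rw [Perm.mul_apply, relabel_apply_eq_of_restrict_eq hrc (ht.trans ht₀.symm) hx,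
      ← Perm.mul_apply, inv_mul_cancel, Perm.one_apply]
  · rw [Finset.mem_coe, Finset.mem_filter_univ] at ht ht'
    exact eq_of_restrict_eq hrc (ht.trans ht'.symm) (mul_left_cancel hmul)

end RelabeledFactorization

lemma comp_conj_eq_self_iff {f : α → ι} {σ : Perm α} (g : Perm α) :
    (f ∘ g) ∘ ⇑(g⁻¹ * σ * g) = f ∘ g ↔ f ∘ σ = f := by
  rw [← g.surjective.injective_comp_right.eq_iff (a := f ∘ σ)]
  simp only [Function.comp_assoc, ← Perm.coe_mul, mul_assoc, mul_inv_cancel_left]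

variable [Fintype α] [DecidableEq α] [DecidableEq ι] [DecidableEq κ] {r : α → ι} {c : α → κ}

lemma youngSymmetrizer_conj (g π : Perm α) :
    youngSymmetrizer r c (g * π * g⁻¹) = youngSymmetrizer (r ∘ g) (c ∘ g) π := by
  refine Fintype.sum_equiv (MulAut.conj g⁻¹).toEquiv _ _ fun p => ?_
  have hright : (g⁻¹ * p * g)⁻¹ * π = g⁻¹ * (p⁻¹ * (g * π * g⁻¹)) * g := by group
  have hsign : Perm.sign (g⁻¹ * (p⁻¹ * (g * π * g⁻¹)) * g) = Perm.sign (p⁻¹ * (g * π * g⁻¹)) := by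
    rw [mul_assoc, Perm.sign_mul, mul_comm, ← Perm.sign_mul, mul_inv_cancel_right]
  simp only [MulEquiv.toEquiv_eq_coe, EquivLike.coe_coe, MulAut.conj_apply, inv_inv, hright, hsign,
    comp_conj_eq_self_iff]

lemma abs_youngSymmetrizer_le (π : Perm α) :
    |youngSymmetrizer r c π| ≤
      Nat.card {F : ColoredFactorization π ι κ // F.rowColor = r ∧ F.colColor = c} := by
  let factorizationEquiv : {σ : Perm α // r ∘ σ = r ∧ c ∘ ⇑(σ⁻¹ * π) = c} ≃
      {F : ColoredFactorization π ι κ // F.rowColor = r ∧ F.colColor = c} :=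
    { toFun σ := ⟨⟨σ, r, c, σ.2.1, σ.2.2⟩, rfl, rfl⟩
      invFun := fun ⟨F, hrow, hcol⟩ => ⟨F.left, hrow ▸ F.rowColor_comp, hcol ▸ F.colColor_comp⟩
      left_inv _ := rfl
      right_inv F := by
        obtain ⟨F, rfl, rfl⟩ := F
        rfl }
  rw [← Nat.card_congr factorizationEquiv, Nat.card_eq_fintype_card, Fintype.card_subtype,
    Finset.card_filter, Nat.cast_sum]
  refine (Finset.abs_sum_le_sum_abs _ _).trans (Finset.sum_le_sum fun σ _ => ?_)
  rw [Nat.cast_ite, apply_ite abs, abs_zero, Perm.sign_abs, Nat.cast_one, Nat.cast_zero]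

lemma abs_youngCharacter_le [Finite ι] [Finite κ]
    (hrc : ∀ x y, r x = r y → c x = c y → x = y) (π : Perm α) :
    |youngCharacter r c π| ≤ (Fintype.card α - π.cycleType.sum).factorial *
      Nat.card (ColoredFactorization (supportPerm π) ι κ) := by
  have hcard : ∑ g : Perm α, (Nat.card {F : ColoredFactorization π ι κ //
      F.rowColor = r ∘ g ∧ F.colColor = c ∘ g}) = Nat.card (RelabeledFactorization r c π) := by
    rw [Nat.card_congr (subtypeProdEquivSigmaSubtype fun (g : Perm α)
      (F : ColoredFactorization π ι κ) => F.rowColor = r ∘ g ∧ F.colColor = c ∘ g), Nat.card_sigma]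
  calc |youngCharacter r c π|
      ≤ ∑ g : Perm α, (Nat.card {F : ColoredFactorization π ι κ //
          F.rowColor = r ∘ g ∧ F.colColor = c ∘ g} : ℤ) := by
        refine (Finset.abs_sum_le_sum_abs _ _).trans (Finset.sum_le_sum fun g _ => ?_)
        rw [youngSymmetrizer_conj]
        exact abs_youngSymmetrizer_le π
    _ = Nat.card (RelabeledFactorization r c π) := by rw [← hcard, Nat.cast_sum]
    _ ≤ _ := by exact_mod_cast RelabeledFactorization.card_le hrc

lemma youngCharacter_comp_of_injective {ι' κ' : Type*} [DecidableEq ι'] [DecidableEq κ']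
    {e : ι → ι'} {e' : κ → κ'} (he : e.Injective) (he' : e'.Injective) (r : α → ι) (c : α → κ)
    (π : Perm α) : youngCharacter (e ∘ r) (e' ∘ c) π = youngCharacter r c π := by
  simp only [youngCharacter, youngSymmetrizer, Function.comp_assoc, he.comp_left.eq_iff,
    he'.comp_left.eq_iff]

end RelabeledFactorization

section Numerics

lemma add_one_pow_le_exp_one_mul_pow {K n : ℕ} (h : K ≤ n) :
    ((n : ℝ) + 1) ^ K ≤ Real.exp 1 * (n : ℝ) ^ K := by
  rcases n.eq_zero_or_pos with rfl | hn
  · simp [Nat.le_zero.1 h]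
  have hn : (0 : ℝ) < n := Nat.cast_pos.2 hn
  calc ((n : ℝ) + 1) ^ K = (1 / n + 1) ^ K * (n : ℝ) ^ K := by rw [← mul_pow]; field_simp; ring
    _ ≤ Real.exp (1 / n) ^ K * (n : ℝ) ^ K := by gcongr; exact Real.add_one_le_exp _
    _ = Real.exp (K / n) * (n : ℝ) ^ K := by rw [← Real.exp_nat_mul, mul_one_div]
    _ ≤ Real.exp 1 * (n : ℝ) ^ K := by
      gcongr
      exact div_le_one_of_le₀ (Nat.cast_le.2 h) hn.le

lemma pow_le_exp_one_pow_mul_descFactorial {K n : ℕ} (h : K ≤ n) :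
    (n : ℝ) ^ K ≤ Real.exp 1 ^ K * n.descFactorial K := by
  induction K generalizing n with
  | zero => simp
  | succ K ih =>
    obtain ⟨n, rfl⟩ := Nat.exists_eq_succ_of_ne_zero (K.succ_pos.trans_le h).ne'
    have hK : K ≤ n := Nat.succ_le_succ_iff.1 h
    rw [Nat.succ_descFactorial_succ, Nat.cast_mul, Nat.cast_succ]
    calc ((n : ℝ) + 1) ^ (K + 1) = (n + 1) * (n + 1) ^ K := pow_succ' _ _
      _ ≤ (n + 1) * (Real.exp 1 * (n : ℝ) ^ K) := by
        gcongr
        exact add_one_pow_le_exp_one_mul_pow hK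
      _ ≤ (n + 1) * (Real.exp 1 * (Real.exp 1 ^ K * n.descFactorial K)) := by
        gcongr
        exact ih hK
      _ = Real.exp 1 ^ (K + 1) * ((n + 1) * n.descFactorial K) := by ring

lemma factorial_sub_div_factorial_le {K n : ℕ} (h : K ≤ n) :
    ((n - K).factorial : ℝ) / n.factorial ≤ (Real.exp 1 / n) ^ K := by
  rcases n.eq_zero_or_pos with rfl | hn
  · simp [Nat.le_zero.1 h]
  have : (0 : ℝ) < n := Nat.cast_pos.2 hn
  rw [div_pow, div_le_div_iff₀ (by positivity) (by positivity),
    ← Nat.factorial_mul_descFactorial h, Nat.cast_mul, mul_left_comm]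
  gcongr
  exact pow_le_exp_one_pow_mul_descFactorial h

lemma sq_mul_cube_le_max {C s : ℝ} (hC : 1 ≤ C) (hs : 0 < s) (m : ℝ) :
    (42 * Real.exp 1 * max 1 (2 * m / (C * s))) ^ 2 * C ^ 3 ≤
      max ((16 * Real.exp 1 ^ 3 * C) ^ 3) ((32 * Real.exp 1 ^ 2 * C) ^ 2 * m ^ 2 / s ^ 2) := by
  set e := Real.exp 1
  have : 0 < C := one_pos.trans_le hC
  have he : 2.7 < e := Real.exp_one_gt_d9.trans' (by norm_num)
  rcases max_choice 1 (2 * m / (C * s)) with h | h <;> rw [h]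
  · refine le_max_of_le_left ?_
    have he7 : 1 ≤ e ^ 7 := one_le_pow₀ (by linarith)
    calc (42 * e * 1) ^ 2 * C ^ 3 = 1764 * (e ^ 2 * C ^ 3) := by ring
      _ ≤ 4096 * e ^ 7 * (e ^ 2 * C ^ 3) := by gcongr; linarith
      _ = (16 * e ^ 3 * C) ^ 3 := by ring
  · refine le_max_of_le_right ?_
    have he2 : 7056 ≤ 1024 * e ^ 2 * C := by nlinarith
    calc (42 * e * (2 * m / (C * s))) ^ 2 * C ^ 3 = 7056 * (e ^ 2 * C * m ^ 2 / s ^ 2) := by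
          field_simp
          ring
      _ ≤ 1024 * e ^ 2 * C * (e ^ 2 * C * m ^ 2 / s ^ 2) := by gcongr
      _ = (32 * e ^ 2 * C) ^ 2 * m ^ 2 / s ^ 2 := by ring

lemma exp_div_sq_pow_mul_le {C s : ℝ} (hC : 1 ≤ C) (hs : 0 < s) {m q : ℕ} (hq : q ≤ m) :
    (Real.exp 1 / s ^ 2) ^ (m + q) * ((C * s) ^ (m + q + q) *
      (42 * max 1 ((m + q : ℕ) / (C * s))) ^ (m + q)) ≤
      (max ((16 * Real.exp 1 ^ 3 * C) ^ 3) ((32 * Real.exp 1 ^ 2 * C) ^ 2 * (m : ℝ) ^ 2 / s ^ 2)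
        / s) ^ m := by
  set e := Real.exp 1
  set Y := max 1 (((m + q : ℕ) : ℝ) / (C * s))
  set Z := max 1 (2 * (m : ℝ) / (C * s))
  have : 0 < C := one_pos.trans_le hC
  have he : 1 < e := Real.one_lt_exp_iff.2 one_pos
  have hY : 1 ≤ Y := le_max_left _ _
  have hYZ : Y ≤ Z := by
    refine max_le_max le_rfl ?_
    gcongr
    exact_mod_cast (by omega : m + q ≤ 2 * m)
  have h42 : 1 ≤ 42 * e * Y := by nlinarith
  calc (e / s ^ 2) ^ (m + q) * ((C * s) ^ (m + q + q) * (42 * Y) ^ (m + q))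
      = (42 * e * Y) ^ (m + q) * C ^ (m + q + q) * (1 / s) ^ m := by
        simp only [div_pow, mul_pow, one_pow]
        field_simp
        ring
    _ ≤ (42 * e * Y) ^ (2 * m) * C ^ (3 * m) * (1 / s) ^ m := by
        gcongr
        all_goals omega
    _ ≤ (42 * e * Z) ^ (2 * m) * C ^ (3 * m) * (1 / s) ^ m := by gcongr
    _ = ((42 * e * Z) ^ 2 * C ^ 3 / s) ^ m := by
        rw [pow_mul, pow_mul, ← mul_pow, ← mul_pow, mul_one_div]
    _ ≤ _ := by
        gcongr
        exact sq_mul_cube_le_max hC hs m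

end Numerics

lemma one_le_of_sum_eq {n : ℕ} (hn : 0 < n) {lam : Fin n → ℕ} (hsum : ∑ i, lam i = n) {C : ℝ}
    (hC : 0 ≤ C)
    (hrows : ((Finset.univ.filter fun i : Fin n => lam i ≠ 0).card : ℝ) ≤ C * Real.sqrt n)
    (hcols : ∀ i : Fin n, (lam i : ℝ) ≤ C * Real.sqrt n) : 1 ≤ C := by
  have hle : (n : ℝ) ≤ C ^ 2 * n := calc
    (n : ℝ) = ∑ i with lam i ≠ 0, (lam i : ℝ) := by
      rw [← Nat.cast_sum, Finset.sum_filter_ne_zero, hsum]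
    _ ≤ (Finset.univ.filter fun i : Fin n => lam i ≠ 0).card • (C * Real.sqrt n) :=
      Finset.sum_le_card_nsmul _ _ _ fun i _ => hcols i
    _ ≤ (C * Real.sqrt n) * (C * Real.sqrt n) := by
      rw [nsmul_eq_mul]
      gcongr
    _ = C ^ 2 * n := by rw [← sq, mul_pow, Real.sq_sqrt n.cast_nonneg]
  exact (one_le_sq_iff₀ hC).1 (le_of_mul_le_mul_right (by rwa [one_mul]) (Nat.cast_pos.2 hn))

namespace Tableau

variable {n : ℕ} {lam : Fin n → ℕ} (T : Tableau lam)

lemma card_range_row_le :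
    Fintype.card (Set.range T.row) ≤ (Finset.univ.filter fun i => lam i ≠ 0).card := by
  rw [← Set.toFinset_card]
  refine Finset.card_le_card fun i hi => ?_
  obtain ⟨x, rfl⟩ := Set.mem_toFinset.1 hi
  exact (Finset.mem_filter_univ _).2 ((T.col x).val.zero_le.trans_lt (T.col_lt x)).ne'

lemma card_range_col_le {L : ℕ} (hlam : ∀ i, lam i ≤ L) : Fintype.card (Set.range T.col) ≤ L := by
  rw [← Set.toFinset_card, ← Finset.card_range L]
  refine Finset.card_le_card_of_injOn Fin.val (fun j hj => ?_) Fin.val_injective.injOn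
  obtain ⟨x, rfl⟩ := Set.mem_toFinset.1 hj
  exact Finset.mem_coe.2 (Finset.mem_range.2 ((T.col_lt x).trans_le (hlam _)))

lemma abs_youngCharacter_le_factorial_mul_card (π : Perm (Fin n)) :
    |youngCharacter T.row T.col π| ≤ (n - π.cycleType.sum).factorial *
      Nat.card (ColoredFactorization (supportPerm π) (Set.range T.row) (Set.range T.col)) := by
  have hrange := youngCharacter_comp_of_injective Subtype.val_injective Subtype.val_injective
    (Set.rangeFactorization T.row) (Set.rangeFactorization T.col) π
  have hbound := CharBound.abs_youngCharacter_le (r := Set.rangeFactorization T.row)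
    (c := Set.rangeFactorization T.col)
    (fun x y hrow hcol => T.eq_of_row_eq_of_col_eq (congrArg Subtype.val hrow)
      (congrArg Subtype.val hcol)) π
  rwa [← hrange, Fintype.card_fin] at hbound

lemma card_coloredFactorization_supportPerm_le {N : ℝ}
    (hrows : ((Finset.univ.filter fun i => lam i ≠ 0).card : ℝ) ≤ N)
    (hcols : ∀ i, (lam i : ℝ) ≤ N) {π : Perm (Fin n)} (hπ : π ≠ 1) :
    (Nat.card (ColoredFactorization (supportPerm π) (Set.range T.row) (Set.range T.col)) : ℝ) ≤
      N ^ (π.cycleType.sum + π.cycleType.card) *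
        (42 * max 1 (π.cycleType.sum / N)) ^ π.cycleType.sum := by
  obtain ⟨x, hx⟩ : ∃ x, π x ≠ x := by
    by_contra! h
    exact hπ (Perm.ext h)
  have : Nonempty {x // π x ≠ x} := ⟨⟨x, hx⟩⟩
  have : Nonempty (Set.range T.col) := ⟨⟨T.col x, x, rfl⟩⟩
  have hN : 0 ≤ N := (Nat.cast_nonneg _).trans hrows
  have hcount := ColoredFactorization.card_le_pow_mul (ι := Set.range T.row)
    (κ := Set.range T.col) (supportPerm π) ((Nat.cast_le.2 T.card_range_row_le).trans hrows)
    ((Nat.cast_le.2 (T.card_range_col_le fun i => Nat.le_floor (hcols i))).trans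
      (Nat.floor_le hN))
  rwa [card_parts_partition_supportPerm, card_apply_ne_eq_sum_cycleType] at hcount

lemma abs_youngCharacter_le {N : ℝ}
    (hrows : ((Finset.univ.filter fun i => lam i ≠ 0).card : ℝ) ≤ N)
    (hcols : ∀ i, (lam i : ℝ) ≤ N) {π : Perm (Fin n)} (hπ : π ≠ 1) :
    |(youngCharacter T.row T.col π : ℝ)| ≤ (n - π.cycleType.sum).factorial *
      (N ^ (π.cycleType.sum + π.cycleType.card) *
        (42 * max 1 (π.cycleType.sum / N)) ^ π.cycleType.sum) := by
  refine le_trans ?_ (mul_le_mul_of_nonneg_left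
    (T.card_coloredFactorization_supportPerm_le hrows hcols hπ) (Nat.cast_nonneg _))
  exact_mod_cast T.abs_youngCharacter_le_factorial_mul_card π

end Tableau

lemma fullCycleType_one (n : ℕ) :
    fullCycleType (1 : Perm (Fin n)) = Multiset.replicate n 1 := by
  simp [fullCycleType]

lemma exists_abs_normChar_le {n : ℕ} {lam : Fin n → ℕ} (hanti : Antitone lam)
    (hsum : ∑ i, lam i = n) : ∃ T : Tableau lam, ∀ π : Perm (Fin n),
      |normChar n lam π| ≤ |(youngCharacter T.row T.col π : ℝ)| / n.factorial := by
  obtain ⟨T, a, h⟩ := exists_frobChar_eq_mul_youngCharacter hanti hsum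
  refine ⟨T, fun π => ?_⟩
  have hone : (youngCharacter T.row T.col 1 : ℝ) = n.factorial := by
    rw [youngCharacter_one fun _ _ => T.eq_of_row_eq_of_col_eq, Fintype.card_fin, Int.cast_natCast]
  rw [normChar, ← fullCycleType_one, fullCycleType_eq_parts_partition,
    fullCycleType_eq_parts_partition, h, h, hone, abs_div, abs_mul, abs_mul, Nat.abs_cast]
  rcases eq_or_ne a 0 with rfl | ha
  · simp only [abs_zero, zero_mul, zero_div]
    positivity
  · rw [mul_div_mul_left _ _ (abs_ne_zero.2 ha)]

lemma abs_normChar_le {n : ℕ} {lam : Fin n → ℕ} (hanti : Antitone lam) (hsum : ∑ i, lam i = n)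
    {N : ℝ} (hrows : ((Finset.univ.filter fun i => lam i ≠ 0).card : ℝ) ≤ N)
    (hcols : ∀ i, (lam i : ℝ) ≤ N) {π : Perm (Fin n)} (hπ : π ≠ 1) :
    |normChar n lam π| ≤ (Real.exp 1 / n) ^ π.cycleType.sum *
      (N ^ (π.cycleType.sum + π.cycleType.card) *
        (42 * max 1 (π.cycleType.sum / N)) ^ π.cycleType.sum) := by
  obtain ⟨T, hT⟩ := exists_abs_normChar_le hanti hsum
  have hN : 0 ≤ N := (Nat.cast_nonneg _).trans hrows
  refine (hT π).trans ?_
  grw [T.abs_youngCharacter_le hrows hcols hπ]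
  rw [mul_div_right_comm]
  gcongr
  exact factorial_sub_div_factorial_le (π.sum_cycleType_le.trans_eq (Fintype.card_fin n))

lemma abs_normChar_one_le (n : ℕ) (lam : Fin n → ℕ) : |normChar n lam 1| ≤ 1 := by
  rw [normChar, fullCycleType_one, abs_div]
  exact div_self_le_one _

lemma two_mul_card_cycleType_le_sum {α : Type*} [Fintype α] [DecidableEq α] (π : Perm α) :
    2 * π.cycleType.card ≤ π.cycleType.sum := by
  rw [mul_comm, ← smul_eq_mul]
  exact Multiset.card_nsmul_le_sum fun _ => Perm.two_le_of_mem_cycleType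

end CharBound

/-- explicit-constants bound for characters of balanced Young diagrams. -/
theorem char_bound_explicit (C : ℝ) (hC : 0 < C) (n : ℕ) (lam : Fin n → ℕ)
    (hanti : ∀ i j : Fin n, i ≤ j → lam j ≤ lam i)
    (hsum : ∑ i, lam i = n)
    (hrows : ((Finset.univ.filter fun i : Fin n => lam i ≠ 0).card : ℝ) ≤ C * Real.sqrt n)
    (hcols : ∀ i : Fin n, (lam i : ℝ) ≤ C * Real.sqrt n)
    (π : Equiv.Perm (Fin n)) :
    |normChar n lam π| ≤
      (max ((16 * Real.exp 1 ^ 3 * C) ^ 3)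
          ((32 * Real.exp 1 ^ 2 * C) ^ 2 * (permLength π : ℝ) ^ 2 / n) /
        Real.sqrt n) ^ permLength π := by
  rcases eq_or_ne π 1 with rfl | hπ
  · simpa [permLength] using CharBound.abs_normChar_one_le n lam
  have hn : 0 < n := Nat.pos_of_ne_zero fun h => hπ (by subst h; exact Subsingleton.elim _ _)
  have hC1 : 1 ≤ C := CharBound.one_le_of_sum_eq hn hsum hC.le hrows hcols
  have hs : 0 < Real.sqrt n := Real.sqrt_pos.2 (Nat.cast_pos.2 hn)
  have hcycles := CharBound.two_mul_card_cycleType_le_sum π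
  have hsupport : π.cycleType.sum = permLength π + π.cycleType.card := by
    rw [permLength]
    omega
  have hle := CharBound.abs_normChar_le (fun i j => hanti i j) hsum hrows hcols hπ
  rw [hsupport] at hle
  have hbound := CharBound.exp_div_sq_pow_mul_le hC1 hs (m := permLength π) (q := π.cycleType.card)
    (by omega)
  rw [Real.sq_sqrt n.cast_nonneg] at hbound
  exact hle.trans hbound
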